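/- arXiv:2112.14489 — 4 statements merged into one kernel-verified Lean document; each statement's English description precedes it below -/
import Mathlib

section
/- Let s₀ be an odd positive integer. Suppose m ≡ 2 or 3 (mod 4), n ≡ 1 (mod 4), √m ∈ L₁(s₀), √r ∈ L₁(s₀), and √n ∈ L₄(s₀). Then not all elements of s₀𝒪_K⁺ can be represented as a sum of squares in 𝒪_K; i.e., there exists a totally positive α ∈ 𝒪_K such that s₀α is not a sum of squares of elements of 𝒪_K. -/
/-! A sum of squares in `𝒪_K` is congruent to a square modulo `2𝒪_K`, because
`∑ xᵢ² ≡ (∑ xᵢ)²`. Since `2` ramifies in `ℚ(√m)`, not every class modulo `2` is a square, and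
multiplication by the odd number `s₀` does not change the class. So `α = (m + 1) + √m`, which is
totally positive, is a witness.

In coordinates: write `g = gcd(m, n)`, `m = m₀ g`, `n = n₀ g`, `r = m₀ n₀`. Every element of `𝒪_K`
has the form `(X + Y√m + Z√n + W√r) / 2` with integers `X ≡ Z` and `Y ≡ W (mod 2)`
(`integral_coords`). In its square the coefficients of `√m` and `√r` are `(XY + n₀ZW) / 2` and
`(XW + gYZ) / 2`; as `n₀ ≡ g (mod 4)`, their difference is congruent to `(X - gZ)(Y - W) / 2`
modulo `2`, hence is even. The same holds for sums of squares, whereas for `s₀α` this difference is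
the odd number `s₀`.

Conjugation is handled by hand: the coordinates of `P(x)`, for an integer polynomial `P`, transform
under sign changes of `√m`, `√n` as those of `x` do (`aeval_coords`), so by linear independence of
`1, √m, √n, √r` over `ℚ` the conjugates of an integral element are integral. -/

open Polynomial

/-- The real biquadratic field `K = ℚ(√m, √n)`, as a subfield of `ℝ`. -/
noncomputable def Kbq (m n : ℕ) : IntermediateField ℚ ℝ :=
  IntermediateField.adjoin ℚ {Real.sqrt (m : ℝ), Real.sqrt (n : ℝ)}

/-- `x` is a totally positive element of `K = ℚ(√m, √n)`: it lies in `K` and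
every embedding `σ : K → ℝ` sends it to a positive real. -/
def IsTotPos (m n : ℕ) (x : ℝ) : Prop :=
  ∃ h : x ∈ Kbq m n, ∀ σ : Kbq m n →+* ℝ, 0 < σ ⟨x, h⟩

/-- `x` belongs to the ring of integers `𝒪_K` of `K = ℚ(√m, √n)`. -/
def MemOK (m n : ℕ) (x : ℝ) : Prop :=
  x ∈ Kbq m n ∧ IsIntegral ℤ x

/-- `γ` is a sum of squares of elements of `𝒪_K`. -/
def IsSumSqOK (m n : ℕ) (γ : ℝ) : Prop :=
  ∃ (t : ℕ) (x : Fin t → ℝ), (∀ i, MemOK m n (x i)) ∧ γ = ∑ i, (x i) ^ 2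

/-- The set `L₁(s₀) = [2s₀+4, ∞) ∪ ⋃_{i≥2} [2s₀/i + i√40, 2s₀/(i−1) − (i−1)√70]`. -/
noncomputable def L1 (s : ℕ) : Set ℝ :=
  Set.Ici (2 * (s : ℝ) + 4) ∪
    ⋃ (i : ℕ) (_ : 2 ≤ i),
      Set.Icc (2 * (s : ℝ) / (i : ℝ) + (i : ℝ) * Real.sqrt 40)
        (2 * (s : ℝ) / ((i : ℝ) - 1) - ((i : ℝ) - 1) * Real.sqrt 70)

/-- The set `L₂(s₀) = [s₀/2+4, ∞) ∪ ⋃_{i≥2} [s₀/(2i) + i√40, s₀/(2(i−1)) − (i−1)√70]`. -/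
noncomputable def L2 (s : ℕ) : Set ℝ :=
  Set.Ici ((s : ℝ) / 2 + 4) ∪
    ⋃ (i : ℕ) (_ : 2 ≤ i),
      Set.Icc ((s : ℝ) / (2 * (i : ℝ)) + (i : ℝ) * Real.sqrt 40)
        ((s : ℝ) / (2 * ((i : ℝ) - 1)) - ((i : ℝ) - 1) * Real.sqrt 70)

/-- The set `L₃(s₀) = [s₀/2+8, ∞) ∪ ⋃_{i≥2} [s₀/(2i) + 2i√40, s₀/(2(i−1)) − 2(i−1)√70]`. -/
noncomputable def L3 (s : ℕ) : Set ℝ :=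
  Set.Ici ((s : ℝ) / 2 + 8) ∪
    ⋃ (i : ℕ) (_ : 2 ≤ i),
      Set.Icc ((s : ℝ) / (2 * (i : ℝ)) + 2 * (i : ℝ) * Real.sqrt 40)
        ((s : ℝ) / (2 * ((i : ℝ) - 1)) - 2 * ((i : ℝ) - 1) * Real.sqrt 70)

/-- The set `L₄(s₀) = [s₀+4, ∞) ∪ ⋃_{i≥2} [s₀/(2i+1) + (4i+2)√40, s₀/(2(i−1)) − (4i−2)√70]`. -/
noncomputable def L4 (s : ℕ) : Set ℝ :=
  Set.Ici ((s : ℝ) + 4) ∪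
    ⋃ (i : ℕ) (_ : 2 ≤ i),
      Set.Icc ((s : ℝ) / (2 * (i : ℝ) + 1) + (4 * (i : ℝ) + 2) * Real.sqrt 40)
        ((s : ℝ) / (2 * ((i : ℝ) - 1)) - (4 * (i : ℝ) - 2) * Real.sqrt 70)

/-! ### Coordinates with respect to `1, √m, √n, √r` -/

/-- The real numbers `A, B, C` behave as `√m, √n, √r` for `m = m₀ g`, `n = n₀ g`, `r = m₀ n₀`.
The relations are invariant under changing the signs of two of `A, B, C`. -/
structure BiquadRel (m₀ n₀ g : ℕ) (A B C : ℝ) : Prop where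
  AA : A * A = m₀ * g
  BB : B * B = n₀ * g
  CC : C * C = m₀ * n₀
  AB : A * B = g * C
  AC : A * C = m₀ * B
  BC : B * C = n₀ * A

/-- The coordinates of `P(p + qA + sB + tC)` do not depend on the choice of `A, B, C`. -/
lemma aeval_coords (m₀ n₀ g : ℕ) (p q s t : ℚ) (P : ℤ[X]) :
    ∃ c₀ c₁ c₂ c₃ : ℚ, ∀ A B C : ℝ, BiquadRel m₀ n₀ g A B C →
      aeval ((p : ℝ) + q * A + s * B + t * C) P = c₀ + c₁ * A + c₂ * B + c₃ * C := by
  induction P using Polynomial.induction_on' with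
  | add P Q hP hQ =>
    obtain ⟨a₀, a₁, a₂, a₃, ha⟩ := hP
    obtain ⟨b₀, b₁, b₂, b₃, hb⟩ := hQ
    refine ⟨a₀ + b₀, a₁ + b₁, a₂ + b₂, a₃ + b₃, fun A B C h => ?_⟩
    rw [map_add, ha A B C h, hb A B C h]
    push_cast
    ring
  | monomial k c =>
    induction k with
    | zero => exact ⟨c, 0, 0, 0, fun A B C h => by simp⟩
    | succ k ih =>
      obtain ⟨a₀, a₁, a₂, a₃, ha⟩ := ih
      refine ⟨a₀ * p + a₁ * q * (m₀ * g) + a₂ * s * (n₀ * g) + a₃ * t * (m₀ * n₀),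
        a₀ * q + a₁ * p + n₀ * (a₂ * t + a₃ * s),
        a₀ * s + a₂ * p + m₀ * (a₁ * t + a₃ * q),
        a₀ * t + a₃ * p + g * (a₁ * s + a₂ * q), fun A B C h => ?_⟩
      have e : (monomial (k + 1) c : ℤ[X]) = monomial k c * X := by
        rw [monomial_mul_X]
      rw [e, map_mul, ha A B C h, aeval_X]
      push_cast
      linear_combination (a₁ * q : ℝ) * h.AA + (a₂ * s : ℝ) * h.BB + (a₃ * t : ℝ) * h.CC
        + (a₁ * s + a₂ * q : ℝ) * h.AB + (a₁ * t + a₃ * q : ℝ) * h.AC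
        + (a₂ * t + a₃ * s : ℝ) * h.BC

lemma rat_lin_indep {d : ℝ} (hd : Irrational d) {a b : ℚ} (h : (a : ℝ) + b * d = 0) :
    a = 0 ∧ b = 0 := by
  have hb : b = 0 := by
    by_contra hb
    have h1 : Irrational ((a : ℝ) + b * d) := (hd.ratCast_mul hb).ratCast_add a
    rw [h] at h1
    exact not_irrational_zero h1
  subst hb
  refine ⟨?_, rfl⟩
  simpa using h

/-- Linear independence of `1, √m, √n, √r` over `ℚ`. Moving two of the four terms to the other side
and squaring gives `c₀² = m c₁² = n c₂² = r c₃²`. -/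
lemma lin_indep {m₀ n₀ g : ℕ} {A B C : ℝ} (h : BiquadRel m₀ n₀ g A B C)
    (hA : Irrational A) (hB : Irrational B) (hC : Irrational C) {c₀ c₁ c₂ c₃ : ℚ}
    (h0 : (c₀ : ℝ) + c₁ * A + c₂ * B + c₃ * C = 0) :
    c₀ = 0 ∧ c₁ = 0 ∧ c₂ = 0 ∧ c₃ = 0 := by
  have e1 := (rat_lin_indep hA (a := c₀ ^ 2 + m₀ * g * c₁ ^ 2 - n₀ * g * c₂ ^ 2 - m₀ * n₀ * c₃ ^ 2)
    (b := 2 * c₀ * c₁ - 2 * n₀ * c₂ * c₃) (by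
      push_cast
      linear_combination (c₀ + c₁ * A - c₂ * B - c₃ * C : ℝ) * h0
        - (c₁ ^ 2 : ℝ) * h.AA + (c₂ ^ 2 : ℝ) * h.BB + (c₃ ^ 2 : ℝ) * h.CC
        + (2 * c₂ * c₃ : ℝ) * h.BC)).1
  have e2 := (rat_lin_indep hB (a := c₀ ^ 2 + n₀ * g * c₂ ^ 2 - m₀ * g * c₁ ^ 2 - m₀ * n₀ * c₃ ^ 2)
    (b := 2 * c₀ * c₂ - 2 * m₀ * c₁ * c₃) (by
      push_cast
      linear_combination (c₀ + c₂ * B - c₁ * A - c₃ * C : ℝ) * h0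
        - (c₂ ^ 2 : ℝ) * h.BB + (c₁ ^ 2 : ℝ) * h.AA + (c₃ ^ 2 : ℝ) * h.CC
        + (2 * c₁ * c₃ : ℝ) * h.AC)).1
  have e3 := (rat_lin_indep hC (a := c₀ ^ 2 + m₀ * n₀ * c₃ ^ 2 - m₀ * g * c₁ ^ 2 - n₀ * g * c₂ ^ 2)
    (b := 2 * c₀ * c₃ - 2 * g * c₁ * c₂) (by
      push_cast
      linear_combination (c₀ + c₃ * C - c₁ * A - c₂ * B : ℝ) * h0
        - (c₃ ^ 2 : ℝ) * h.CC + (c₁ ^ 2 : ℝ) * h.AA + (c₂ ^ 2 : ℝ) * h.BB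
        + (2 * c₁ * c₂ : ℝ) * h.AB)).1
  have key : ∀ {D : ℝ} {d c : ℚ}, Irrational D → D * D = d → c₀ ^ 2 = d * c ^ 2 →
      c₀ = 0 ∧ c = 0 := by
    intro D d c hD hd hc
    have hc' : (c₀ : ℝ) ^ 2 = d * c ^ 2 := by exact_mod_cast hc
    have hp : ((c₀ : ℝ) + c * D) * ((c₀ : ℝ) + ((-c : ℚ) : ℝ) * D) = 0 := by
      push_cast
      linear_combination hc' - (c ^ 2 : ℝ) * hd
    rcases mul_eq_zero.mp hp with h1 | h1
    · exact rat_lin_indep hD h1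
    · have := rat_lin_indep hD h1
      exact ⟨this.1, by linarith [this.2]⟩
  have k1 := key (d := m₀ * g) (c := c₁) hA (by push_cast; exact h.AA)
    (by linear_combination (e2 + e3) / 2)
  have k2 := key (d := n₀ * g) (c := c₂) hB (by push_cast; exact h.BB)
    (by linear_combination (e1 + e3) / 2)
  have k3 := key (d := m₀ * n₀) (c := c₃) hC (by push_cast; exact h.CC)
    (by linear_combination (e1 + e2) / 2)
  exact ⟨k1.1, k1.2, k2.2, k3.2⟩

/-! ### Integrality in quadratic fields -/

lemma exists_int_of_integral {q : ℚ} (h : IsIntegral ℤ (q : ℝ)) : ∃ z : ℤ, (z : ℚ) = q := by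
  have h2 : IsIntegral ℤ q := by
    have h1 : IsIntegral ℤ (algebraMap ℚ ℝ q) := by simpa using h
    exact (isIntegral_algebraMap_iff (algebraMap ℚ ℝ).injective).mp h1
  obtain ⟨z, hz⟩ := IsIntegrallyClosed.isIntegral_iff.mp h2
  exact ⟨z, by simpa using hz⟩

lemma exists_int_of_squarefree {d : ℕ} (hd : Squarefree d) {q : ℚ} {z : ℤ}
    (h : (d : ℚ) * q ^ 2 = z) : ∃ w : ℤ, (w : ℚ) = q := by
  have h1 : (d : ℤ) * q.num ^ 2 = z * (q.den : ℤ) ^ 2 := by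
    have : (d : ℚ) * q.num ^ 2 = z * (q.den : ℚ) ^ 2 := by
      have hq : q * q.den = q.num := Rat.mul_den_eq_num q
      rw [← h, ← hq]
      ring
    exact_mod_cast this
  have hcop : IsCoprime ((q.den : ℤ) ^ 2) (q.num ^ 2) := by
    apply IsCoprime.pow
    rw [Int.isCoprime_iff_gcd_eq_one, Int.gcd_comm]
    exact q.reduced
  have h2 : (q.den : ℤ) ^ 2 ∣ (d : ℤ) :=
    hcop.dvd_of_dvd_mul_right (Dvd.intro_left z h1.symm)
  have h3 : q.den * q.den ∣ d := by
    rw [← pow_two]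
    exact_mod_cast h2
  have h4 : q.den = 1 := Nat.isUnit_iff.mp (hd _ h3)
  exact ⟨q.num, (Rat.den_eq_one_iff q).mp h4⟩

lemma isIntegral_of_eq {x y : ℝ} (h : IsIntegral ℤ x) (e : y = x) : IsIntegral ℤ y := e ▸ h

/-- Integrality in a quadratic field: the trace and norm of `p + s√d` are integers. -/
lemma quad_integral {d : ℕ} (hd : Squarefree d) {D : ℝ} (hD : D * D = d) {p s : ℚ}
    (h1 : IsIntegral ℤ ((p : ℝ) + s * D)) (h2 : IsIntegral ℤ ((p : ℝ) - s * D)) :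
    ∃ P S k : ℤ, (P : ℚ) = 2 * p ∧ (S : ℚ) = 2 * s ∧ P ^ 2 - d * S ^ 2 = 4 * k := by
  obtain ⟨P, hP⟩ := exists_int_of_integral (q := 2 * p)
    (isIntegral_of_eq (h1.add h2) (by push_cast; ring))
  obtain ⟨k, hk⟩ := exists_int_of_integral (q := p ^ 2 - d * s ^ 2)
    (isIntegral_of_eq (h1.mul h2) (by push_cast; linear_combination (s ^ 2 : ℝ) * hD))
  obtain ⟨S, hS⟩ := exists_int_of_squarefree hd (q := 2 * s) (z := P ^ 2 - 4 * k) (by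
    push_cast
    rw [hP, hk]
    ring)
  refine ⟨P, S, k, hP, hS, ?_⟩
  have : (P : ℚ) ^ 2 - d * S ^ 2 = 4 * k := by
    rw [hP, hS, hk]
    ring
  exact_mod_cast this

lemma even_even_of_sq {d : ℤ} (hd : d % 4 = 2 ∨ d % 4 = 3) {P S k : ℤ}
    (h : P ^ 2 - d * S ^ 2 = 4 * k) : (∃ a, P = 2 * a) ∧ ∃ b, S = 2 * b := by
  obtain ⟨e, he⟩ : ∃ e, d = 4 * e + 2 ∨ d = 4 * e + 3 := ⟨d / 4, by omega⟩
  rcases Int.even_or_odd' P with ⟨a, rfl | rfl⟩ <;> rcases Int.even_or_odd' S with ⟨b, rfl | rfl⟩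
  · exact ⟨⟨a, rfl⟩, ⟨b, rfl⟩⟩
  all_goals
    exfalso
    rcases he with rfl | rfl <;> ring_nf at h <;> omega

lemma same_parity_of_sq {d : ℤ} (hd : d % 4 = 1) {P S k : ℤ}
    (h : P ^ 2 - d * S ^ 2 = 4 * k) : ∃ a, P = S + 2 * a := by
  obtain ⟨e, rfl⟩ : ∃ e, d = 4 * e + 1 := ⟨d / 4, by omega⟩
  rcases Int.even_or_odd' P with ⟨a, rfl | rfl⟩ <;> rcases Int.even_or_odd' S with ⟨b, rfl | rfl⟩
  · exact ⟨a - b, by ring⟩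
  · exfalso
    ring_nf at h
    omega
  · exfalso
    ring_nf at h
    omega
  · exact ⟨a - b, by ring⟩

/-! ### The ring of integers of `K` -/

/-- The shape of the elements of `𝒪_K` when `m ≡ r ≡ 2, 3` and `n ≡ 1 (mod 4)`. The traces to the
three quadratic subfields bound the denominators by `2`; the norm to `ℚ(√n)` gives
`(X - Z)² ≡ m (Y - W)² (mod 4)`, whence the parities. -/
lemma integral_coords {m₀ n₀ g : ℕ} {A B C : ℝ} (h : BiquadRel m₀ n₀ g A B C)
    (hA : Irrational A) (hB : Irrational B) (hC : Irrational C)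
    (hm : Squarefree (m₀ * g)) (hn : Squarefree (n₀ * g)) (hr : Squarefree (m₀ * n₀))
    (hm4 : (m₀ * g) % 4 = 2 ∨ (m₀ * g) % 4 = 3) (hn4 : (n₀ * g) % 4 = 1)
    (hr4 : (m₀ * n₀) % 4 = (m₀ * g) % 4) {p q s t : ℚ}
    (hx : IsIntegral ℤ ((p : ℝ) + q * A + s * B + t * C)) :
    ∃ X Y Z W a b : ℤ, (X : ℚ) = 2 * p ∧ (Y : ℚ) = 2 * q ∧ (Z : ℚ) = 2 * s ∧ (W : ℚ) = 2 * t ∧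
      X = Z + 2 * a ∧ Y = W + 2 * b := by
  obtain ⟨P, hPm, hP0⟩ := hx
  obtain ⟨c₀, c₁, c₂, c₃, hc⟩ := aeval_coords m₀ n₀ g p q s t P
  have hz := hc A B C h
  rw [aeval_def, hP0] at hz
  obtain ⟨rfl, rfl, rfl, rfl⟩ := lin_indep h hA hB hC hz.symm
  have conj : ∀ A' B' C' : ℝ, BiquadRel m₀ n₀ g A' B' C' →
      IsIntegral ℤ ((p : ℝ) + q * A' + s * B' + t * C') := by
    intro A' B' C' h'
    refine ⟨P, hPm, ?_⟩
    rw [← aeval_def, hc A' B' C' h']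
    simp
  have x1 := conj A B C h
  have x2 := conj (-A) B (-C) ⟨by linear_combination h.AA, h.BB, by linear_combination h.CC,
    by linear_combination -h.AB, by linear_combination h.AC, by linear_combination -h.BC⟩
  have x3 := conj A (-B) (-C) ⟨h.AA, by linear_combination h.BB, by linear_combination h.CC,
    by linear_combination -h.AB, by linear_combination -h.AC, by linear_combination h.BC⟩
  have x4 := conj (-A) (-B) C ⟨by linear_combination h.AA, by linear_combination h.BB, h.CC,
    by linear_combination h.AB, by linear_combination -h.AC, by linear_combination -h.BC⟩
  have hAA : A * A = ((m₀ * g : ℕ) : ℝ) := by push_cast; exact h.AA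
  have hBB : B * B = ((n₀ * g : ℕ) : ℝ) := by push_cast; exact h.BB
  have hCC : C * C = ((m₀ * n₀ : ℕ) : ℝ) := by push_cast; exact h.CC
  obtain ⟨P1, Q, k1, hP1, hQ, hk1⟩ := quad_integral hm hAA (p := 2 * p) (s := 2 * q)
    (isIntegral_of_eq (x1.add x3) (by push_cast; ring))
    (isIntegral_of_eq (x2.add x4) (by push_cast; ring))
  obtain ⟨P2, S, k2, hP2, hS, hk2⟩ := quad_integral hn hBB (p := 2 * p) (s := 2 * s)
    (isIntegral_of_eq (x1.add x2) (by push_cast; ring))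
    (isIntegral_of_eq (x3.add x4) (by push_cast; ring))
  obtain ⟨P3, T, k3, hP3, hT, hk3⟩ := quad_integral hr hCC (p := 2 * p) (s := 2 * t)
    (isIntegral_of_eq (x1.add x4) (by push_cast; ring))
    (isIntegral_of_eq (x2.add x3) (by push_cast; ring))
  have hm4' : ((m₀ * g : ℕ) : ℤ) % 4 = 2 ∨ ((m₀ * g : ℕ) : ℤ) % 4 = 3 := by omega
  have hn4' : ((n₀ * g : ℕ) : ℤ) % 4 = 1 := by omega
  have hr4' : ((m₀ * n₀ : ℕ) : ℤ) % 4 = 2 ∨ ((m₀ * n₀ : ℕ) : ℤ) % 4 = 3 := by omega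
  obtain ⟨⟨X, rfl⟩, ⟨Y, rfl⟩⟩ := even_even_of_sq hm4' hk1
  obtain ⟨-, ⟨W, rfl⟩⟩ := even_even_of_sq hr4' hk3
  have hP21 : P2 = 2 * X := by
    have : (P2 : ℚ) = ((2 * X : ℤ) : ℚ) := by rw [hP2, hP1]
    exact_mod_cast this
  subst hP21
  obtain ⟨z, hz'⟩ := same_parity_of_sq hn4' hk2
  obtain ⟨Z, rfl⟩ : ∃ Z, S = 2 * Z := ⟨X - z, by linarith⟩
  push_cast at hP1 hQ hS hT
  have eX : (X : ℚ) = 2 * p := by linarith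
  have eY : (Y : ℚ) = 2 * q := by linarith
  have eZ : (Z : ℚ) = 2 * s := by linarith
  have eW : (W : ℚ) = 2 * t := by linarith
  obtain ⟨U, V, k4, hU, hV, hk4⟩ := quad_integral hn hBB
    (p := p ^ 2 + n₀ * g * s ^ 2 - m₀ * g * q ^ 2 - m₀ * n₀ * t ^ 2)
    (s := 2 * p * s - 2 * m₀ * q * t)
    (isIntegral_of_eq (x1.mul x2) (by
      push_cast
      linear_combination -(s ^ 2 : ℝ) * h.BB + (q ^ 2 : ℝ) * h.AA + (t ^ 2 : ℝ) * h.CC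
        + (2 * q * t : ℝ) * h.AC))
    (isIntegral_of_eq (x3.mul x4) (by
      push_cast
      linear_combination -(s ^ 2 : ℝ) * h.BB + (q ^ 2 : ℝ) * h.AA + (t ^ 2 : ℝ) * h.CC
        - (2 * q * t : ℝ) * h.AC))
  obtain ⟨l, rfl⟩ := same_parity_of_sq hn4' hk4
  have f1 : X ^ 2 + n₀ * g * Z ^ 2 - m₀ * g * Y ^ 2 - m₀ * n₀ * W ^ 2 = 2 * (V + 2 * l) := by
    have : (X : ℚ) ^ 2 + n₀ * g * Z ^ 2 - m₀ * g * Y ^ 2 - m₀ * n₀ * W ^ 2 = 2 * (V + 2 * l) := by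
      push_cast at hU
      rw [hU, eX, eY, eZ, eW]
      ring
    exact_mod_cast this
  have f2 : X * Z - m₀ * Y * W = V := by
    have : (X : ℚ) * Z - m₀ * Y * W = V := by
      rw [hV, eX, eY, eZ, eW]
      ring
    exact_mod_cast this
  obtain ⟨e, he⟩ : ∃ e : ℤ, (n₀ : ℤ) * g = 4 * e + 1 := ⟨(n₀ * g : ℕ) / 4, by push_cast at *; omega⟩
  obtain ⟨e', he'⟩ : ∃ e' : ℤ, (m₀ : ℤ) * n₀ = m₀ * g + 4 * e' :=
    ⟨((m₀ * n₀ : ℕ) - (m₀ * g : ℕ)) / 4, by push_cast at *; omega⟩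
  have hgodd : g % 2 = 1 := by
    rcases Nat.mod_two_eq_zero_or_one g with h0 | h0
    · have : (n₀ * g) % 2 = 0 := by simp [Nat.mul_mod, h0]
      omega
    · exact h0
  obtain ⟨g', hg'⟩ : ∃ g' : ℤ, (g : ℤ) = 2 * g' + 1 := ⟨(g : ℤ) / 2, by omega⟩
  have f3 : (X - Z) ^ 2 - ((m₀ * g : ℕ) : ℤ) * (Y - W) ^ 2
      = 4 * (l - e * Z ^ 2 + e' * W ^ 2 + m₀ * g' * Y * W) := by
    push_cast
    linear_combination f1 - 2 * f2 - Z ^ 2 * he + W ^ 2 * he' + 2 * m₀ * Y * W * hg'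
  obtain ⟨⟨a, ha⟩, ⟨b, hb⟩⟩ := even_even_of_sq hm4' f3
  exact ⟨X, Y, Z, W, a, b, eX, eY, eZ, eW, by linarith, by linarith⟩

lemma mem_Kbq_coords {m n m₀ n₀ g : ℕ} {C : ℝ} (h : BiquadRel m₀ n₀ g √(m : ℝ) √(n : ℝ) C)
    {x : ℝ} (hx : x ∈ Kbq m n) :
    ∃ p q s t : ℚ, x = p + q * √(m : ℝ) + s * √(n : ℝ) + t * C := by
  have halg : ∀ y ∈ ({√(m : ℝ), √(n : ℝ)} : Set ℝ), IsAlgebraic ℚ y := by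
    have aux : ∀ k : ℕ, IsAlgebraic ℚ √(k : ℝ) := fun k => by
      have : IsIntegral ℚ √(k : ℝ) := by
        apply IsIntegral.of_pow (n := 2) (by norm_num)
        rw [Real.sq_sqrt (by positivity)]
        exact isIntegral_algebraMap (R := ℚ) (x := (k : ℚ))
      exact this.isAlgebraic
    rintro y (rfl | rfl) <;> exact aux _
  have hx' : x ∈ (Kbq m n).toSubalgebra := hx
  rw [Kbq, IntermediateField.adjoin_toSubalgebra_of_isAlgebraic halg] at hx'
  clear hx
  induction hx' using Algebra.adjoin_induction with
  | mem y hy =>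
    rcases hy with hy | hy
    · exact ⟨0, 1, 0, 0, by rw [hy]; simp⟩
    · rw [Set.mem_singleton_iff] at hy
      exact ⟨0, 0, 1, 0, by rw [hy]; simp⟩
  | algebraMap c => exact ⟨c, 0, 0, 0, by simp⟩
  | add x y _ _ hx hy =>
    obtain ⟨a₀, a₁, a₂, a₃, rfl⟩ := hx
    obtain ⟨p, q, s, t, rfl⟩ := hy
    exact ⟨a₀ + p, a₁ + q, a₂ + s, a₃ + t, by push_cast; ring⟩
  | mul x y _ _ hx hy =>
    obtain ⟨a₀, a₁, a₂, a₃, rfl⟩ := hx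
    obtain ⟨p, q, s, t, rfl⟩ := hy
    refine ⟨a₀ * p + a₁ * q * (m₀ * g) + a₂ * s * (n₀ * g) + a₃ * t * (m₀ * n₀),
      a₀ * q + a₁ * p + n₀ * (a₂ * t + a₃ * s),
      a₀ * s + a₂ * p + m₀ * (a₁ * t + a₃ * q),
      a₀ * t + a₃ * p + g * (a₁ * s + a₂ * q), ?_⟩
    push_cast
    linear_combination (a₁ * q : ℝ) * h.AA + (a₂ * s : ℝ) * h.BB + (a₃ * t : ℝ) * h.CC
      + (a₁ * s + a₂ * q : ℝ) * h.AB + (a₁ * t + a₃ * q : ℝ) * h.AC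
      + (a₂ * t + a₃ * s : ℝ) * h.BC

/-! ### Squares -/

/-- In the square of an element of the shape given by `integral_coords`, the coefficients of `√m`
and `√r` differ by an even integer. -/
lemma sq_coords {m₀ n₀ g : ℕ} {A B C : ℝ} (h : BiquadRel m₀ n₀ g A B C)
    (hng : ∃ e : ℤ, (n₀ : ℤ) = g + 4 * e) (hg : ∃ e : ℤ, (g : ℤ) = 2 * e + 1)
    {p q s t : ℚ} {X Y Z W a b : ℤ} (hX : (X : ℚ) = 2 * p) (hY : (Y : ℚ) = 2 * q)
    (hZ : (Z : ℚ) = 2 * s) (hW : (W : ℚ) = 2 * t) (ha : X = Z + 2 * a) (hb : Y = W + 2 * b) :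
    ∃ (p' q' s' t' : ℚ) (k : ℤ),
      ((p : ℝ) + q * A + s * B + t * C) ^ 2 = p' + q' * A + s' * B + t' * C ∧ q' - t' = 2 * k := by
  obtain ⟨e, he⟩ := hng
  obtain ⟨f, hf⟩ := hg
  refine ⟨p ^ 2 + m₀ * g * q ^ 2 + n₀ * g * s ^ 2 + m₀ * n₀ * t ^ 2,
    2 * (p * q + n₀ * s * t), 2 * (p * s + m₀ * q * t), 2 * (p * t + g * q * s),
    (a - f * Z) * b + e * Z * W, ?_, ?_⟩
  · push_cast
    linear_combination (q ^ 2 : ℝ) * h.AA + (s ^ 2 : ℝ) * h.BB + (t ^ 2 : ℝ) * h.CC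
      + (2 * q * s : ℝ) * h.AB + (2 * q * t : ℝ) * h.AC + (2 * s * t : ℝ) * h.BC
  · have key : X * Y + n₀ * Z * W - X * W - g * Y * Z = 4 * ((a - f * Z) * b + e * Z * W) := by
      rw [he, hf, ha, hb]
      ring
    have key' : (X : ℚ) * Y + n₀ * Z * W - X * W - g * Y * Z
        = 4 * (((a - f * Z) * b + e * Z * W : ℤ) : ℚ) := by exact_mod_cast key
    rw [hX, hY, hZ, hW] at key'
    linear_combination key' / 2

lemma irrational_sqrt_of_squarefree {d : ℕ} (hd : Squarefree d) (h1 : d ≠ 1) :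
    Irrational √(d : ℝ) := by
  rw [irrational_sqrt_natCast_iff]
  rintro ⟨k, rfl⟩
  have hk : k = 1 := Nat.isUnit_iff.mp (hd k dvd_rfl)
  exact h1 (by rw [hk])

/-! ### The witness -/

lemma memOK_witness (m n : ℕ) : MemOK m n ((m : ℝ) + 1 + √(m : ℝ)) := by
  refine ⟨?_, ?_⟩
  · have h : √(m : ℝ) ∈ Kbq m n :=
      IntermediateField.subset_adjoin _ _ (Set.mem_insert _ _)
    exact add_mem (add_mem (natCast_mem _ m) (one_mem _)) h
  · have h : IsIntegral ℤ √(m : ℝ) := by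
      apply IsIntegral.of_pow (n := 2) (by norm_num)
      rw [Real.sq_sqrt (by positivity)]
      exact isIntegral_algebraMap (R := ℤ) (x := (m : ℤ))
    exact ((isIntegral_algebraMap (R := ℤ) (x := (m : ℤ))).add isIntegral_one).add h

lemma isTotPos_witness (m n : ℕ) : IsTotPos m n ((m : ℝ) + 1 + √(m : ℝ)) := by
  refine ⟨(memOK_witness m n).1, fun σ => ?_⟩
  have h : √(m : ℝ) ∈ Kbq m n :=
    IntermediateField.subset_adjoin _ _ (Set.mem_insert _ _)
  have e : (⟨(m : ℝ) + 1 + √(m : ℝ), (memOK_witness m n).1⟩ : Kbq m n)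
      = (m : Kbq m n) + 1 + ⟨√(m : ℝ), h⟩ := by
    apply Subtype.ext
    push_cast
    rfl
  have e2 : (⟨√(m : ℝ), h⟩ : Kbq m n) ^ 2 = (m : Kbq m n) := by
    apply Subtype.ext
    push_cast
    exact Real.sq_sqrt (by positivity)
  have e3 := congrArg σ e2
  rw [map_pow, map_natCast] at e3
  rw [e, map_add, map_add, map_natCast, map_one]
  nlinarith [sq_nonneg (σ ⟨√(m : ℝ), h⟩ + 1), sq_nonneg (σ ⟨√(m : ℝ), h⟩)]

/-- **Theorem 1(iii).** If `s₀` is odd, `m ≡ 2 or 3 (mod 4)`, `n ≡ 1 (mod 4)`,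
`√m, √r ∈ L₁(s₀)` and `√n ∈ L₄(s₀)`, then not all elements of `s₀𝒪_K⁺` are sums of
squares in `𝒪_K`. -/
theorem not_all_sums_of_squares_of_mem_L1_L4
    (m n r s₀ : ℕ) (hm : 1 < m) (hn : 1 < n) (hmn : m ≠ n)
    (hsm : Squarefree m) (hsn : Squarefree n)
    (hr : r = m * n / Nat.gcd m n ^ 2) (hs₀ : 0 < s₀) (hs₀odd : s₀ % 2 = 1)
    (hm4 : m % 4 = 2 ∨ m % 4 = 3) (hn4 : n % 4 = 1)
    (h₁ : Real.sqrt (m : ℝ) ∈ L1 s₀) (h₂ : Real.sqrt (r : ℝ) ∈ L1 s₀)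
    (h₃ : Real.sqrt (n : ℝ) ∈ L4 s₀) :
    ∃ α : ℝ, MemOK m n α ∧ IsTotPos m n α ∧ ¬ IsSumSqOK m n ((s₀ : ℝ) * α) := by
  have hgpos : 0 < Nat.gcd m n := Nat.gcd_pos_of_pos_left n (by omega)
  obtain ⟨g, m₀, n₀, hg0, hcop, hmg, hng⟩ := Nat.exists_coprime' (m := m) (n := n) hgpos
  have hgeq : Nat.gcd m n = g := by
    rw [hmg, hng, Nat.gcd_mul_right, hcop.gcd_eq_one, one_mul]
  have hr' : r = m₀ * n₀ := by
    rw [hr, hgeq, hmg, hng]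
    exact Nat.div_eq_of_eq_mul_left (by positivity) (by ring)
  clear hr hgpos hgeq
  subst hr'
  have hrel : BiquadRel m₀ n₀ g √(m : ℝ) √(n : ℝ) (√(m₀ : ℝ) * √(n₀ : ℝ)) := by
    have ha := Real.mul_self_sqrt (Nat.cast_nonneg (α := ℝ) m₀)
    have hb := Real.mul_self_sqrt (Nat.cast_nonneg (α := ℝ) n₀)
    have hc := Real.mul_self_sqrt (Nat.cast_nonneg (α := ℝ) g)
    have hA : √(m : ℝ) = √(m₀ : ℝ) * √(g : ℝ) := by
      rw [hmg, Nat.cast_mul, Real.sqrt_mul (Nat.cast_nonneg _)]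
    have hB : √(n : ℝ) = √(n₀ : ℝ) * √(g : ℝ) := by
      rw [hng, Nat.cast_mul, Real.sqrt_mul (Nat.cast_nonneg _)]
    rw [hA, hB]
    generalize √(m₀ : ℝ) = a at *
    generalize √(n₀ : ℝ) = b at *
    generalize √(g : ℝ) = c at *
    constructor <;> simp only [← ha, ← hb, ← hc] <;> ring
  have hC : √(m₀ : ℝ) * √(n₀ : ℝ) = √((m₀ * n₀ : ℕ) : ℝ) := by
    rw [Nat.cast_mul, Real.sqrt_mul (Nat.cast_nonneg _)]
  rw [hC] at hrel
  have hsr : Squarefree (m₀ * n₀) := (Nat.squarefree_mul hcop).mpr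
    ⟨hsm.squarefree_of_dvd ⟨g, hmg⟩, hsn.squarefree_of_dvd ⟨g, hng⟩⟩
  -- `n₀ g ≡ 1 (mod 4)` forces `n₀` and `g` to be odd and congruent modulo `4`.
  have hmod : n₀ % 4 = g % 4 ∧ g % 2 = 1 := by
    have h1 : (n₀ % 4) * (g % 4) % 4 = 1 := by rw [← Nat.mul_mod, ← hng, hn4]
    have h2 : n₀ % 4 < 4 := Nat.mod_lt _ (by norm_num)
    have h3 : g % 4 < 4 := Nat.mod_lt _ (by norm_num)
    have h4 : g % 2 = g % 4 % 2 := by omega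
    rw [h4]
    clear h4
    generalize n₀ % 4 = u at h1 h2 ⊢
    generalize g % 4 = v at h1 h3 ⊢
    interval_cases u <;> interval_cases v <;> omega
  have hr4 : (m₀ * n₀) % 4 = (m₀ * g) % 4 := by
    rw [Nat.mul_mod, hmod.1, ← Nat.mul_mod]
  have hA : Irrational √(m : ℝ) := irrational_sqrt_of_squarefree hsm (by omega)
  have hB : Irrational √(n : ℝ) := irrational_sqrt_of_squarefree hsn (by omega)
  have hCi : Irrational √((m₀ * n₀ : ℕ) : ℝ) :=
    irrational_sqrt_of_squarefree hsr (by rw [hmg] at hm4; omega)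
  refine ⟨(m : ℝ) + 1 + √(m : ℝ), memOK_witness m n, isTotPos_witness m n, ?_⟩
  rintro ⟨l, x, hx, hsum⟩
  have hsq : ∀ i, ∃ (p q s t : ℚ) (k : ℤ),
      x i ^ 2 = p + q * √(m : ℝ) + s * √(n : ℝ) + t * √((m₀ * n₀ : ℕ) : ℝ) ∧
        q - t = 2 * k := by
    intro i
    obtain ⟨p, q, s, t, hxi⟩ := mem_Kbq_coords hrel (hx i).1
    have hint := (hx i).2
    rw [hxi] at hint
    obtain ⟨X, Y, Z, W, a, b, eX, eY, eZ, eW, ha, hb⟩ := integral_coords hrel hA hB hCi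
      (hmg ▸ hsm) (hng ▸ hsn) hsr (hmg ▸ hm4) (hng ▸ hn4) hr4 hint
    rw [hxi]
    exact sq_coords hrel ⟨((n₀ : ℤ) - g) / 4, by omega⟩ ⟨(g : ℤ) / 2, by omega⟩ eX eY eZ eW ha hb
  choose p q s t k hk hqt using hsq
  have htot : ((∑ i, p i - s₀ * (m + 1) : ℚ) : ℝ) + ((∑ i, q i - s₀ : ℚ) : ℝ) * √(m : ℝ)
      + ((∑ i, s i : ℚ) : ℝ) * √(n : ℝ) + ((∑ i, t i : ℚ) : ℝ) * √((m₀ * n₀ : ℕ) : ℝ) = 0 := by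
    rw [Finset.sum_congr rfl fun i _ => hk i] at hsum
    simp only [Finset.sum_add_distrib, ← Finset.sum_mul] at hsum
    push_cast at hsum ⊢
    linear_combination -hsum
  obtain ⟨-, h1, -, h3⟩ := lin_indep hrel hA hB hCi htot
  have h4 : (s₀ : ℚ) = 2 * ((∑ i, k i : ℤ) : ℚ) := by
    push_cast
    rw [Finset.mul_sum, ← Finset.sum_congr rfl fun i _ => hqt i, Finset.sum_sub_distrib]
    linarith
  have h5 : (s₀ : ℤ) = 2 * ∑ i, k i := by exact_mod_cast h4
  omega
end

section
/- Suppose m ≡ 1 (mod 4) and n ≡ 1 (mod 4) (so that also r ≡ 1 (mod 4)). Then for every positive integer s ≥ max{m/2, n/2, r/2} and every totally positive α ∈ 𝒪_K, the element sα can be written as a diagonal quadratic form over 𝒪_K with coefficients 1 or −1; that is, there exist x₁, …, x_u ∈ 𝒪_K and y₁, …, y_v ∈ 𝒪_K such that sα = (x₁² + ⋯ + x_u²) − (y₁² + ⋯ + y_v²). -/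
/-!
Every element of `𝒪_K`, in particular `s * α`, is a difference of sums of squares: it suffices
that every element of `𝒪_K` is a square modulo `2𝒪_K`, which holds because `2` is unramified in `K`.

Put `a = (1 + √m)/2`, `b = (1 + √n)/2` and `R = ℤ[a, b]`. Since `m, n ≡ 1 (mod 4)`, the relations
`a² = a + k`, `b² = b + l` hold with `k, l ∈ ℤ`, so the square of Frobenius is the identity on
`R/2R`: `x⁴ ≡ x (mod 2R)` for all `x ∈ R` (`exists_pow_four_eq`). In particular `R/2R` is reduced,
which makes `R` integrally closed at `2`: if `2γ ∈ R` with `γ` integral then `γ ∈ R`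
(`mem_of_two_mul_mem`). As `R` spans `K` over `ℚ`, each `β ∈ 𝒪_K` has an odd multiple
`dβ ∈ R`, whence `dβ = ((dβ)²)² - 2y` and `β = w² - 2z` with `w, z ∈ 𝒪_K`. Finally
`-2z = z² + 1² - (z + 1)²`.
-/

open Polynomial

/-- The order `ℤ[(1 + √m)/2, (1 + √n)/2]`. -/
noncomputable def Rbq (m n : ℕ) : Subalgebra ℤ ℝ :=
  Algebra.adjoin ℤ {(1 + Real.sqrt (m : ℝ)) / 2, (1 + Real.sqrt (n : ℝ)) / 2}

lemma half_sq {m : ℕ} (hm4 : m % 4 = 1) :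
    ((1 + Real.sqrt (m : ℝ)) / 2) ^ 2 = (1 + Real.sqrt (m : ℝ)) / 2 + ((m / 4 : ℕ) : ℝ) := by
  have h : Real.sqrt (m : ℝ) ^ 2 = m := Real.sq_sqrt (Nat.cast_nonneg m)
  have h2 : (m : ℝ) = 4 * ((m / 4 : ℕ) : ℝ) + 1 := by
    have : m = 4 * (m / 4) + 1 := by omega
    exact_mod_cast this
  linear_combination (1 / 4) * h + (1 / 4) * h2

lemma sqrt_mem_K_left (m n : ℕ) : Real.sqrt (m : ℝ) ∈ Kbq m n :=
  IntermediateField.subset_adjoin ℚ _ (by simp)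

lemma sqrt_mem_K_right (m n : ℕ) : Real.sqrt (n : ℝ) ∈ Kbq m n :=
  IntermediateField.subset_adjoin ℚ _ (by simp)

lemma half_mem_R_left (m n : ℕ) : (1 + Real.sqrt (m : ℝ)) / 2 ∈ Rbq m n :=
  Algebra.subset_adjoin (by simp)

lemma half_mem_R_right (m n : ℕ) : (1 + Real.sqrt (n : ℝ)) / 2 ∈ Rbq m n :=
  Algebra.subset_adjoin (by simp)

lemma isIntegral_half {m : ℕ} (hm4 : m % 4 = 1) :
    IsIntegral ℤ ((1 + Real.sqrt (m : ℝ)) / 2) := by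
  refine ⟨X ^ 2 - X - C ((m / 4 : ℕ) : ℤ), by monicity!, ?_⟩
  have := half_sq hm4
  simp only [eval₂_sub, eval₂_pow, eval₂_X, eval₂_C]
  rw [this, eq_intCast, Int.cast_natCast]
  ring

lemma memOK_add {m n : ℕ} {x y : ℝ} (hx : MemOK m n x) (hy : MemOK m n y) :
    MemOK m n (x + y) := ⟨add_mem hx.1 hy.1, hx.2.add hy.2⟩

lemma memOK_mul {m n : ℕ} {x y : ℝ} (hx : MemOK m n x) (hy : MemOK m n y) :
    MemOK m n (x * y) := ⟨mul_mem hx.1 hy.1, hx.2.mul hy.2⟩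

lemma memOK_int (m n : ℕ) (k : ℤ) : MemOK m n (k : ℝ) :=
  ⟨intCast_mem _ k, isIntegral_algebraMap (R := ℤ) (A := ℝ) (x := k)⟩

lemma memOK_of_mem_R {m n : ℕ} (hm4 : m % 4 = 1) (hn4 : n % 4 = 1) {x : ℝ}
    (hx : x ∈ Rbq m n) : MemOK m n x := by
  have h2 : (2 : ℝ) ∈ Kbq m n := ofNat_mem _ 2
  induction hx using Algebra.adjoin_induction with
  | mem x hx =>
    rcases hx with rfl | rfl
    · exact ⟨div_mem (add_mem (one_mem _) (sqrt_mem_K_left m n)) h2, isIntegral_half hm4⟩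
    · exact ⟨div_mem (add_mem (one_mem _) (sqrt_mem_K_right m n)) h2, isIntegral_half hn4⟩
  | algebraMap k => exact memOK_int m n k
  | add x y _ _ hx hy => exact memOK_add hx hy
  | mul x y _ _ hx hy => exact memOK_mul hx hy

/-- The square of Frobenius is the identity on `R/2R`. -/
lemma exists_pow_four_eq {m n : ℕ} (hm4 : m % 4 = 1) (hn4 : n % 4 = 1) {x : ℝ}
    (hx : x ∈ Rbq m n) : ∃ y ∈ Rbq m n, x ^ 4 = x + 2 * y := by
  have gen : ∀ (a : ℝ) (k : ℕ), a ∈ Rbq m n → a ^ 2 = a + k →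
      ∃ y ∈ Rbq m n, a ^ 4 = a + 2 * y := by
    intro a k ha h
    obtain ⟨c, hc⟩ := Nat.even_mul_succ_self k
    have hc' : (k : ℝ) * (k + 1) = c + c := by exact_mod_cast hc
    refine ⟨k * a + c, add_mem (mul_mem (natCast_mem _ k) ha) (natCast_mem _ c), ?_⟩
    linear_combination (a ^ 2 + a + k + 1) * h + hc'
  induction hx using Algebra.adjoin_induction with
  | mem x hx =>
    rcases hx with rfl | rfl
    · exact gen _ _ (half_mem_R_left m n) (half_sq hm4)
    · exact gen _ _ (half_mem_R_right m n) (half_sq hn4)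
  | algebraMap k =>
    have : (2 : ℤ) ∣ k ^ 4 - k := by
      rcases Int.even_or_odd' k with ⟨c, rfl | rfl⟩
      · exact ⟨8 * c ^ 4 - c, by ring⟩
      · exact ⟨8 * c ^ 4 + 16 * c ^ 3 + 12 * c ^ 2 + 3 * c, by ring⟩
    obtain ⟨c, hc⟩ := this
    refine ⟨c, intCast_mem _ c, ?_⟩
    have hc' : (k : ℝ) ^ 4 - k = 2 * c := by exact_mod_cast hc
    simp only [eq_intCast]
    linear_combination hc'
  | add x y hx hy ihx ihy =>
    obtain ⟨u, hu, hu'⟩ := ihx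
    obtain ⟨v, hv, hv'⟩ := ihy
    refine ⟨u + v + (2 * x ^ 3 * y + 3 * x ^ 2 * y ^ 2 + 2 * x * y ^ 3), ?_, ?_⟩
    · have h2 : (2 : ℝ) ∈ Rbq m n := ofNat_mem _ 2
      have h3 : (3 : ℝ) ∈ Rbq m n := ofNat_mem _ 3
      change x ∈ Rbq m n at hx
      change y ∈ Rbq m n at hy
      exact add_mem (add_mem hu hv) (add_mem (add_mem
        (mul_mem (mul_mem h2 (pow_mem hx 3)) hy)
        (mul_mem (mul_mem h3 (pow_mem hx 2)) (pow_mem hy 2)))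
        (mul_mem (mul_mem h2 hx) (pow_mem hy 3)))
    · linear_combination hu' + hv'
  | mul x y hx hy ihx ihy =>
    obtain ⟨u, hu, hu'⟩ := ihx
    obtain ⟨v, hv, hv'⟩ := ihy
    refine ⟨u * y + x * v + 2 * (u * v), ?_, ?_⟩
    · have h2 : (2 : ℝ) ∈ Rbq m n := ofNat_mem _ 2
      exact add_mem (add_mem (mul_mem hu hy) (mul_mem hx hv)) (mul_mem h2 (mul_mem hu hv))
    · rw [mul_pow, hu', hv']
      ring

/-- `x ^ 4 ^ j ≡ x (mod 2R)`; so an element of `R` nilpotent modulo `2R` lies in `2R`. -/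
lemma exists_pow_four_pow_eq {m n : ℕ} (hm4 : m % 4 = 1) (hn4 : n % 4 = 1) {x : ℝ}
    (hx : x ∈ Rbq m n) (j : ℕ) : ∃ y ∈ Rbq m n, x ^ 4 ^ j = x + 2 * y := by
  induction j with
  | zero => exact ⟨0, zero_mem _, by simp⟩
  | succ j ih =>
    obtain ⟨y, hy, h⟩ := ih
    obtain ⟨z, hz, h'⟩ := exists_pow_four_eq hm4 hn4 (pow_mem hx (4 ^ j))
    refine ⟨y + z, add_mem hy hz, ?_⟩
    rw [pow_succ, pow_mul, h', h]
    ring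

/-- `R` is integrally closed at the prime `2`: an integral equation for `γ` of degree `N` gives
`(2γ)^N ∈ 2R`, and `R/2R` is reduced. -/
lemma mem_of_two_mul_mem {m n : ℕ} (hm4 : m % 4 = 1) (hn4 : n % 4 = 1) {γ : ℝ}
    (hγ : IsIntegral ℤ γ) (h : 2 * γ ∈ Rbq m n) : γ ∈ Rbq m n := by
  obtain ⟨p, hp, hp0⟩ := hγ
  rw [← aeval_def, aeval_eq_sum_range, Finset.sum_range_succ, hp.coeff_natDegree, one_smul] at hp0
  have key : ∃ ρ ∈ Rbq m n, (2 * γ) ^ p.natDegree = 2 * ρ := by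
    refine ⟨-∑ i ∈ Finset.range p.natDegree,
      ((p.coeff i * 2 ^ (p.natDegree - 1 - i) : ℤ) : ℝ) * (2 * γ) ^ i,
      neg_mem (sum_mem fun i _ => mul_mem (intCast_mem _ _) (pow_mem h i)), ?_⟩
    rw [mul_pow, eq_neg_of_add_eq_zero_right hp0, mul_neg, mul_neg, Finset.mul_sum,
      Finset.mul_sum]
    congr 1
    refine Finset.sum_congr rfl fun i hi => ?_
    have hi' := Finset.mem_range.mp hi
    obtain ⟨t, ht⟩ : ∃ t, p.natDegree = i + t + 1 := ⟨p.natDegree - i - 1, by omega⟩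
    have ht' : p.natDegree - 1 - i = t := by omega
    rw [ht', ht, zsmul_eq_mul]
    push_cast
    ring
  obtain ⟨ρ, hρ, hρ'⟩ := key
  obtain ⟨y, hy, hy'⟩ := exists_pow_four_pow_eq hm4 hn4 h p.natDegree
  obtain ⟨t, ht⟩ := Nat.exists_eq_add_of_le (Nat.lt_pow_self (n := p.natDegree)
    (by norm_num : 1 < 4)).le
  rw [ht, pow_add, hρ'] at hy'
  have : γ = ρ * (2 * γ) ^ t - y := by linear_combination (-1 / 2) * hy'
  rw [this]
  exact sub_mem (mul_mem hρ (pow_mem h t)) hy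

lemma exists_nat_mul_mem {m n : ℕ} {x : ℝ} (hx : x ∈ Kbq m n) :
    ∃ N : ℕ, N ≠ 0 ∧ (N : ℝ) * x ∈ Rbq m n := by
  have hint : ∀ k : ℕ, IsAlgebraic ℚ (Real.sqrt (k : ℝ)) := by
    intro k
    refine ⟨X ^ 2 - C (k : ℚ), X_pow_sub_C_ne_zero (by norm_num) _, ?_⟩
    simp
  have hsq : ∀ k : ℕ, (1 + Real.sqrt (k : ℝ)) / 2 ∈ Rbq m n → Real.sqrt (k : ℝ) ∈ Rbq m n := by
    intro k hk
    have : Real.sqrt (k : ℝ) = (2 : ℕ) * ((1 + Real.sqrt (k : ℝ)) / 2) - 1 := by push_cast; ring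
    rw [this]
    exact sub_mem (mul_mem (natCast_mem _ 2) hk) (one_mem _)
  -- As the generators are algebraic, `K` is the `ℚ`-algebra they generate: no inverses needed.
  have hx' : x ∈ Algebra.adjoin ℚ {Real.sqrt (m : ℝ), Real.sqrt (n : ℝ)} := by
    rw [← IntermediateField.adjoin_toSubalgebra_of_isAlgebraic]
    · exact hx
    · rintro y (rfl | rfl)
      · exact hint m
      · exact hint n
  clear hx
  induction hx' using Algebra.adjoin_induction with
  | mem x hx =>
    refine ⟨1, one_ne_zero, ?_⟩
    rw [Nat.cast_one, one_mul]
    rcases hx with rfl | rfl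
    · exact hsq m (half_mem_R_left m n)
    · exact hsq n (half_mem_R_right m n)
  | algebraMap q =>
    refine ⟨q.den, q.den_nz, ?_⟩
    have : (q.den : ℝ) * (q : ℝ) = q.num := by exact_mod_cast q.den_mul_eq_num
    simp only [eq_ratCast]
    rw [this]
    exact intCast_mem _ _
  | add x y hx hy ihx ihy =>
    obtain ⟨N, hN, h⟩ := ihx
    obtain ⟨M, hM, h'⟩ := ihy
    refine ⟨N * M, mul_ne_zero hN hM, ?_⟩
    have : ((N * M : ℕ) : ℝ) * (x + y) = M * (N * x) + N * (M * y) := by push_cast; ring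
    rw [this]
    exact add_mem (mul_mem (natCast_mem _ _) h) (mul_mem (natCast_mem _ _) h')
  | mul x y hx hy ihx ihy =>
    obtain ⟨N, hN, h⟩ := ihx
    obtain ⟨M, hM, h'⟩ := ihy
    refine ⟨N * M, mul_ne_zero hN hM, ?_⟩
    have : ((N * M : ℕ) : ℝ) * (x * y) = (N * x) * (M * y) := by push_cast; ring
    rw [this]
    exact mul_mem h h'

lemma exists_odd_mul_mem {m n : ℕ} (hm4 : m % 4 = 1) (hn4 : n % 4 = 1) {x : ℝ}
    (hx : MemOK m n x) : ∃ j : ℕ, ((2 * j + 1 : ℕ) : ℝ) * x ∈ Rbq m n := by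
  obtain ⟨N, hN, h⟩ := exists_nat_mul_mem hx.1
  obtain ⟨k, d, ⟨j, rfl⟩, rfl⟩ := Nat.exists_eq_two_pow_mul_odd hN
  refine ⟨j, ?_⟩
  clear hN
  induction k with
  | zero => simpa using h
  | succ k ih =>
    refine ih (mem_of_two_mul_mem hm4 hn4 ?_ ?_)
    · exact (memOK_mul (memOK_int m n (2 ^ k * (2 * j + 1) : ℕ)) hx).2
    · convert h using 1
      push_cast
      ring

/-- Every element of `𝒪_K` is a square modulo `2𝒪_K`. -/
lemma exists_sq_sub_two_mul {m n : ℕ} (hm4 : m % 4 = 1) (hn4 : n % 4 = 1) {x : ℝ}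
    (hx : MemOK m n x) : ∃ w z, MemOK m n w ∧ MemOK m n z ∧ x = w ^ 2 - 2 * z := by
  obtain ⟨j, hj⟩ := exists_odd_mul_mem hm4 hn4 hx
  obtain ⟨y, hy, h⟩ := exists_pow_four_eq hm4 hn4 hj
  refine ⟨(((2 * j + 1 : ℕ) : ℝ) * x) ^ 2, y + j * x,
    memOK_of_mem_R hm4 hn4 (pow_mem hj 2),
    memOK_add (memOK_of_mem_R hm4 hn4 hy) (memOK_mul (memOK_int m n j) hx), ?_⟩
  rw [← pow_mul, h]
  push_cast
  ring

/-- A multiple `sα` of a totally positive integer of `K` is represented by a diagonal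
quadratic form over `𝒪_K` with coefficients `1` or `−1`. -/
theorem diagonal_form_case_one_one
    (m n r : ℕ) (hm : 1 < m) (hn : 1 < n) (hmn : m ≠ n)
    (hsm : Squarefree m) (hsn : Squarefree n)
    (hr : r = m * n / Nat.gcd m n ^ 2)
    (hm4 : m % 4 = 1) (hn4 : n % 4 = 1)
    (s : ℕ) (hs : 0 < s) (hsge : max ((m : ℝ) / 2) (max ((n : ℝ) / 2) ((r : ℝ) / 2)) ≤ (s : ℝ))
    (α : ℝ) (hαO : MemOK m n α) (hαpos : IsTotPos m n α) :
    ∃ (u v : ℕ) (x : Fin u → ℝ) (y : Fin v → ℝ),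
      (∀ i, MemOK m n (x i)) ∧ (∀ j, MemOK m n (y j)) ∧
      (s : ℝ) * α = (∑ i, (x i) ^ 2) - (∑ j, (y j) ^ 2) := by
  obtain ⟨w, z, hw, hz, h⟩ :=
    exists_sq_sub_two_mul hm4 hn4 (memOK_mul (memOK_int m n s) hαO)
  have h1 : MemOK m n 1 := by simpa using memOK_int m n 1
  refine ⟨3, 1, ![w, z, 1], ![z + 1], ?_, ?_, ?_⟩
  · intro i
    fin_cases i
    exacts [hw, hz, h1]
  · intro j
    fin_cases j
    exact memOK_add hz h1
  · simp [Fin.sum_univ_three]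
    simp at h
    linear_combination h
end

section
/- Let s₀, l, k be positive integers, and define I₁ = [2s₀k/l + 2√s₀/√l, 2s₀k/(l−1) − 2√s₀/√(l−1)] and I₂ = [s₀k/(2l) + √s₀/√l, s₀k/(2(l−1)) − √s₀/√(l−1)] for l > 1, while for l = 1 the right endpoints of I₁ and I₂ are taken to be +∞. Suppose m ≡ 2 (mod 4), n ≡ 3 (mod 4), m ≥ s₀, n ≥ s₀, √m ∈ I₁, √r ∈ I₁ and √n ∈ I₂. Then not all elements of s₀𝒪_K⁺ can be represented as a sum of squares in 𝒪_K; i.e., there exists a totally positive α ∈ 𝒪_K such that s₀α is not a sum of squares of elements of 𝒪_K. -/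
/-!
Among `√m`, `4√n`, `√r`, one is in the middle; let `d ∈ {m, n, r}` be the corresponding index and
put `α = A + k√d`, where `A` is the least integer above `k√d`. Then `α` is totally positive, since
its conjugates are `A ± k√d`, and `A - k√d < 1`.

Suppose `s₀α = ∑ xᵢ²`. For `m ≡ 2`, `n ≡ 3 (mod 4)` every integer of `K` has the form
`a + (B/2)√m + c√n + (D/2)√r` with integers `a, B, c, D` and `B ≡ D (mod 2)`
(`Biquad.integral_coords`). Write each `xᵢ` like this and compare the coefficients of `1` and `√d`
(`Biquad.sumSq_coords`). For `d = n`, with `M = √m`, `N = √n`, `R = √r`, this gives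
`E := ∑ ((aᵢ - cᵢN)² + (BᵢM - DᵢR)²/4) = s₀(A - kN) < s₀`,
and Cauchy–Schwarz for `∑ cᵢ(aᵢ - cᵢN)` yields
`(P h₁ + Q h₂ - q)² ≤ P E`
with `P = ∑ cᵢ²`, `Q = 4 ∑ BᵢDᵢ`, `h₁ = N`, `h₂ = MR/(16N)`, `q = s₀k/2`. For `d = m` the same holds
with `P = ∑ Bᵢ²`, `Q = ∑ cᵢDᵢ/2`, `h₁ = M/2`, `h₂ = 2NR/M`, `q = s₀k`, and `d = r` is the case `d = m`
with `m` and `r` exchanged.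

Here `P, Q ≥ 0`, because opposite signs of `Bᵢ, Dᵢ` (or `cᵢ, Dᵢ`) would make `E ≥ s₀`. The middle
choice of `d` puts `h₂` between the suitably scaled other two square roots, so the intervals say that
`l h₁`, `l h₂` exceed `q`, and `(l - 1) h₁`, `(l - 1) h₂` stay below `q`, by margins of order
`√(s₀l)` and `√(s₀(l - 1))`. As `P + Q` is an integer, it is at least `l` or at most `l - 1`, and both
options contradict the Cauchy–Schwarz bound (`core_gap`). In the case `d = m` the sum `P + Q` is only
a half-integer a priori; `l - 1 < P + Q < l` would need some `cᵢDᵢ` odd and small, which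
`odd_pair_absurd` excludes.
-/

open Polynomial

/-- The interval `I₁ = [2s₀k/l + 2√s₀/√l, 2s₀k/(l−1) − 2√s₀/√(l−1)]`
(right endpoint `+∞` when `l = 1`). -/
noncomputable def I1 (s k l : ℕ) : Set ℝ :=
  if l = 1 then
    Set.Ici (2 * (s : ℝ) * (k : ℝ) / (l : ℝ) + 2 * Real.sqrt (s : ℝ) / Real.sqrt (l : ℝ))
  else
    Set.Icc (2 * (s : ℝ) * (k : ℝ) / (l : ℝ) + 2 * Real.sqrt (s : ℝ) / Real.sqrt (l : ℝ))
      (2 * (s : ℝ) * (k : ℝ) / ((l : ℝ) - 1) - 2 * Real.sqrt (s : ℝ) / Real.sqrt ((l : ℝ) - 1))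

/-- The interval `I₂ = [s₀k/(2l) + √s₀/√l, s₀k/(2(l−1)) − √s₀/√(l−1)]`
(right endpoint `+∞` when `l = 1`). -/
noncomputable def I2 (s k l : ℕ) : Set ℝ :=
  if l = 1 then
    Set.Ici ((s : ℝ) * (k : ℝ) / (2 * (l : ℝ)) + Real.sqrt (s : ℝ) / Real.sqrt (l : ℝ))
  else
    Set.Icc ((s : ℝ) * (k : ℝ) / (2 * (l : ℝ)) + Real.sqrt (s : ℝ) / Real.sqrt (l : ℝ))
      ((s : ℝ) * (k : ℝ) / (2 * ((l : ℝ) - 1)) - Real.sqrt (s : ℝ) / Real.sqrt ((l : ℝ) - 1))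

/-- The interval `J = [s₀k/l + 2√s₀/√l, s₀k/(l−2) − 2√s₀/√(l−2)]`
(right endpoint `+∞` when `l ∈ {1, 2}`). -/
noncomputable def Jset (s k l : ℕ) : Set ℝ :=
  if l ≤ 2 then
    Set.Ici ((s : ℝ) * (k : ℝ) / (l : ℝ) + 2 * Real.sqrt (s : ℝ) / Real.sqrt (l : ℝ))
  else
    Set.Icc ((s : ℝ) * (k : ℝ) / (l : ℝ) + 2 * Real.sqrt (s : ℝ) / Real.sqrt (l : ℝ))
      ((s : ℝ) * (k : ℝ) / ((l : ℝ) - 2) - 2 * Real.sqrt (s : ℝ) / Real.sqrt ((l : ℝ) - 2))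

/-! ### The gap inequality -/

/-- Large weights overshoot `q`: if `P + Q ≥ λ²`, then `P h₁ + Q h₂ - q` is at least `S√P`, by
`S λ (P + λ²)/2 ≥ S λ · λ√P`. -/
lemma core_up {q S lam P Q h₁ h₂ : ℝ} (hS : 0 < S) (hlam : 0 < lam) (hq : 0 < q)
    (hP : 0 ≤ P) (hQ : 0 ≤ Q)
    (a₁ : q + S * lam ≤ lam ^ 2 * h₁) (a₂ : q + S * lam / 2 ≤ lam ^ 2 * h₂)
    (hPQ : lam ^ 2 ≤ P + Q) :
    0 < P * h₁ + Q * h₂ - q ∧ S * √P ≤ P * h₁ + Q * h₂ - q := by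
  have hl : 0 < lam ^ 2 := by positivity
  have hsq : √P ^ 2 = P := Real.sq_sqrt hP
  have key : S * lam * ((P + lam ^ 2) / 2) ≤ lam ^ 2 * (P * h₁ + Q * h₂ - q) := by
    have e₁ := mul_le_mul_of_nonneg_left a₁ hP
    have e₂ := mul_le_mul_of_nonneg_left a₂ hQ
    have e₃ : 0 ≤ (P + Q - lam ^ 2) * q := mul_nonneg (by linarith) hq.le
    have e₄ : 0 ≤ (P + Q - lam ^ 2) * (S * lam) := mul_nonneg (by linarith) (by positivity)
    linarith
  constructor
  · have : 0 < S * lam * ((P + lam ^ 2) / 2) := by positivity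
    exact pos_of_mul_pos_right (this.trans_le key) hl.le
  · have : S * lam * (√P * lam) ≤ S * lam * ((P + lam ^ 2) / 2) :=
      mul_le_mul_of_nonneg_left (by nlinarith [sq_nonneg (√P - lam)]) (by positivity)
    have h : lam ^ 2 * (S * √P) ≤ lam ^ 2 * (P * h₁ + Q * h₂ - q) := by linarith
    exact le_of_mul_le_mul_left h hl

/-- Small weights fall short of `q` by at least `S√P`; the counterpart of `core_up`. Here `λ = 0` is
allowed (it occurs for `l = 1`) and forces `P = Q = 0`. -/
lemma core_down {q S lam P Q h₁ h₂ : ℝ} (hS : 0 < S) (hlam : 0 ≤ lam) (hq : 0 < q)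
    (hP : 0 ≤ P) (hQ : 0 ≤ Q) (hh₁ : 0 ≤ h₁)
    (b₁ : lam ^ 2 * h₁ + S * lam ≤ q) (b₂ : lam ^ 2 * h₂ + S * lam / 2 ≤ q)
    (hPQ : P + Q ≤ lam ^ 2) :
    0 < q - (P * h₁ + Q * h₂) ∧ S * √P ≤ q - (P * h₁ + Q * h₂) := by
  rcases hlam.eq_or_lt with h0 | hlam
  · have hP0 : P = 0 := by rw [← h0] at hPQ; linarith
    have hQ0 : Q = 0 := by rw [← h0] at hPQ; linarith
    subst hP0; subst hQ0
    simp [hq, hq.le]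
  have hl : 0 < lam ^ 2 := by positivity
  have hsq : √P ^ 2 = P := Real.sq_sqrt hP
  have key : S * lam * ((P + lam ^ 2) / 2) ≤ lam ^ 2 * (q - (P * h₁ + Q * h₂)) := by
    have e₁ := mul_le_mul_of_nonneg_left b₁ hP
    have e₂ := mul_le_mul_of_nonneg_left b₂ hQ
    have e₃ : 0 ≤ lam ^ 2 * h₁ := by positivity
    have e₄ : 0 ≤ (lam ^ 2 - (P + Q)) * (q - S * lam) :=
      mul_nonneg (by linarith) (by linarith)
    have e₅ : 0 ≤ (lam ^ 2 - (P + Q)) * (S * lam) := mul_nonneg (by linarith) (by positivity)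
    linarith
  constructor
  · have : 0 < S * lam * ((P + lam ^ 2) / 2) := by positivity
    exact pos_of_mul_pos_right (this.trans_le key) hl.le
  · have : S * lam * (√P * lam) ≤ S * lam * ((P + lam ^ 2) / 2) :=
      mul_le_mul_of_nonneg_left (by nlinarith [sq_nonneg (√P - lam)]) (by positivity)
    have h : lam ^ 2 * (S * √P) ≤ lam ^ 2 * (q - (P * h₁ + Q * h₂)) := by linarith
    exact le_of_mul_le_mul_left h hl

/-- Weights `P, Q ≥ 0` whose sum avoids the open interval `(l - 1, l)` keep `P h₁ + Q h₂` so far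
from `q` that the Cauchy–Schwarz bound `(P h₁ + Q h₂ - q)² ≤ P E` fails for `E < s`. Only half the
margin is required of `h₂`, because only `P` occurs on the right-hand side. -/
lemma core_gap {q s l P Q h₁ h₂ E : ℝ} (hs : 0 < s) (hl : 1 ≤ l) (hq : 0 < q)
    (hP : 0 ≤ P) (hQ : 0 ≤ Q) (hh₁ : 0 ≤ h₁) (hE : E < s)
    (a₁ : q + √s * √l ≤ l * h₁) (a₂ : q + √s * √l / 2 ≤ l * h₂)
    (b₁ : (l - 1) * h₁ + √s * √(l - 1) ≤ q) (b₂ : (l - 1) * h₂ + √s * √(l - 1) / 2 ≤ q)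
    (hPQ : l ≤ P + Q ∨ P + Q ≤ l - 1) : P * E < (P * h₁ + Q * h₂ - q) ^ 2 := by
  have hS : 0 < √s := Real.sqrt_pos.2 hs
  have e₁ : √l ^ 2 = l := Real.sq_sqrt (by linarith)
  have e₂ : √(l - 1) ^ 2 = l - 1 := Real.sq_sqrt (by linarith)
  have hsP : (√s * √P) ^ 2 = s * P := by
    rw [mul_pow, Real.sq_sqrt hs.le, Real.sq_sqrt hP]
  have main : ∀ X : ℝ, 0 < X ∧ √s * √P ≤ X → P * E < X ^ 2 := by
    rintro X ⟨hX, hX'⟩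
    rcases hP.eq_or_lt with h0 | h0
    · rw [← h0, zero_mul]; positivity
    · have : (√s * √P) ^ 2 ≤ X ^ 2 := pow_le_pow_left₀ (by positivity) hX' 2
      nlinarith
  rcases hPQ with h | h
  · exact main _ (core_up hS (Real.sqrt_pos.2 (zero_lt_one.trans_le hl)) hq hP hQ (by rwa [e₁])
      (by rwa [e₁]) (by rwa [e₁]))
  · have := main _ (core_down hS (Real.sqrt_nonneg (l - 1)) hq hP hQ hh₁ (by rwa [e₂])
      (by rwa [e₂]) (by rwa [e₂]))
    calc _ < _ := this
      _ = _ := by ring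

/-! ### Sums of squares in real coordinates -/

/-- The constraints on `M = √m`, `N = √n`, `R = √r` coming from `M, R ∈ I₁`, `N ∈ I₂` and
`m, n ≥ s`, with denominators cleared. For `l = 1` the upper bounds `Mhi`, `Rhi`, `Nhi` just say
`0 ≤ s * k`. -/
structure GapData (s k l : ℕ) (M N R : ℝ) : Prop where
  Mpos : 0 < M
  Npos : 0 < N
  Rpos : 0 < R
  Mlo : (s * k : ℝ) + √s * √l ≤ l * (M / 2)
  Mhi : (l - 1 : ℝ) * (M / 2) + √s * √(l - 1) ≤ s * k
  Rlo : (s * k : ℝ) + √s * √l ≤ l * (R / 2)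
  Rhi : (l - 1 : ℝ) * (R / 2) + √s * √(l - 1) ≤ s * k
  Nlo : (s * k : ℝ) + 2 * (√s * √l) ≤ l * (2 * N)
  Nhi : (l - 1 : ℝ) * (2 * N) + 2 * (√s * √(l - 1)) ≤ s * k
  sM : √s ≤ M
  sN : √s ≤ N
  sR : √s ≤ R

lemma GapData.symm {s k l : ℕ} {M N R : ℝ} (h : GapData s k l M N R) : GapData s k l R N M :=
  ⟨h.Rpos, h.Npos, h.Mpos, h.Rlo, h.Rhi, h.Mlo, h.Mhi, h.Nlo, h.Nhi, h.sR, h.sN, h.sM⟩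

/-- Integers of opposite signs make `|xX - yY|` at least `X`. -/
lemma mul_nonneg_of_close {x y : ℤ} {X Y S : ℝ} (hX : S ≤ X) (hY : 0 < Y) (hS : 0 < S)
    (h : (x * X - y * Y) ^ 2 < S ^ 2) : 0 ≤ x * y := by
  by_contra! hneg
  have h' := abs_lt_of_sq_lt_sq' h hS.le
  rcases mul_neg_iff.1 hneg with ⟨hx, hy⟩ | ⟨hx, hy⟩
  · have hx' : (1 : ℝ) ≤ x := by exact_mod_cast hx
    have hy' : (y : ℝ) < 0 := by exact_mod_cast hy
    nlinarith [h'.2, mul_pos_of_neg_of_neg hy' (neg_neg_of_pos hY)]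
  · have hx' : (x : ℝ) ≤ -1 := by exact_mod_cast Int.le_sub_one_of_lt hx
    have hy' : (0 : ℝ) < y := by exact_mod_cast hy
    nlinarith [h'.1, mul_pos hy' hY]

/-- If `4√n` is the middle one of `√m`, `4√n`, `√r`, then `s(A + k√n)` with `A < k√n + 1` is not a sum
of squares: `h0` and `h1` compare the coefficients of `1` and `√n` in such a representation. -/
lemma no_rep_N {s k l τ : ℕ} {M N R p A : ℝ} (hs : 0 < s) (hk : 0 < k) (hl : 0 < l)
    (G : GapData s k l M N R) (hp : M * R = p * N)
    (hmid : (M ≤ 4 * N ∧ 4 * N ≤ R) ∨ (R ≤ 4 * N ∧ 4 * N ≤ M)) (hA : A < k * N + 1)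
    (a B c D : Fin τ → ℤ)
    (h0 : s * A = ∑ i, ((a i : ℝ) ^ 2 + (B i / 2 * M) ^ 2 + (c i * N) ^ 2 + (D i / 2 * R) ^ 2))
    (h1 : (s * k : ℝ) = ∑ i, (2 * a i * c i + p * B i * D i / 2 : ℝ)) : False := by
  have hs' : (0 : ℝ) < s := by exact_mod_cast hs
  have hk' : (0 : ℝ) < k := by exact_mod_cast hk
  have hl' : (1 : ℝ) ≤ l := by exact_mod_cast hl
  have hSS : √(s : ℝ) ^ 2 = s := Real.sq_sqrt hs'.le
  have hS : 0 < √(s : ℝ) := Real.sqrt_pos.2 hs'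
  obtain ⟨Mp, Np, Rp, Mlo, Mhi, Rlo, Rhi, Nlo, Nhi, sM, sN, sR⟩ := id G
  set E := ∑ i, ((a i - c i * N : ℝ) ^ 2 + (B i / 2 * M - D i / 2 * R : ℝ) ^ 2) with hEdef
  have hE : E < s := by
    have : E = s * A - N * (s * k) := by
      rw [h0, h1, hEdef, Finset.mul_sum, ← Finset.sum_sub_distrib]
      refine Finset.sum_congr rfl fun i _ => ?_
      linear_combination (-(B i * D i : ℝ) / 2) * hp
    rw [this]; nlinarith
  have hterm : ∀ i, (a i - c i * N : ℝ) ^ 2 + (B i / 2 * M - D i / 2 * R : ℝ) ^ 2 ≤ E := fun i =>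
    Finset.single_le_sum (f := fun i => (a i - c i * N : ℝ) ^ 2 + (B i / 2 * M - D i / 2 * R : ℝ) ^ 2)
      (fun j _ => by positivity) (Finset.mem_univ i)
  have hBD : ∀ i, 0 ≤ B i * D i := by
    intro i
    by_contra! hneg
    have h := abs_lt_of_sq_lt_sq' (a := (B i / 2 * M - D i / 2 * R : ℝ)) (b := √s)
      (by rw [hSS]; linarith [hterm i, sq_nonneg (a i - c i * N : ℝ)]) hS.le
    rcases mul_neg_iff.1 hneg with ⟨hx, hy⟩ | ⟨hx, hy⟩
    · have hx' : (1 : ℝ) ≤ B i := by exact_mod_cast hx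
      have hy' : (D i : ℝ) ≤ -1 := by exact_mod_cast Int.le_sub_one_of_lt hy
      nlinarith
    · have hx' : (B i : ℝ) ≤ -1 := by exact_mod_cast Int.le_sub_one_of_lt hx
      have hy' : (1 : ℝ) ≤ D i := by exact_mod_cast hy
      nlinarith
  have hCS : (∑ i, (c i : ℝ) * (a i - c i * N)) ^ 2 ≤ (∑ i, (c i : ℝ) ^ 2) * E := by
    refine (Finset.sum_mul_sq_le_sq_mul_sq _ _ _).trans
      (mul_le_mul_of_nonneg_left ?_ (Finset.sum_nonneg fun i _ => sq_nonneg _))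
    exact Finset.sum_le_sum fun i _ => le_add_of_nonneg_right (sq_nonneg _)
  have hlin : ∑ i, (c i : ℝ) * (a i - c i * N) =
      -((∑ i, (c i : ℝ) ^ 2) * N + (4 * ∑ i, (B i * D i : ℝ)) * (p / 16) - s * k / 2) := by
    rw [h1, Finset.sum_div, Finset.mul_sum, Finset.sum_mul, Finset.sum_mul,
      ← Finset.sum_add_distrib, ← Finset.sum_sub_distrib, ← Finset.sum_neg_distrib]
    refine Finset.sum_congr rfl fun i _ => ?_
    ring
  -- `p / 16 = (M / 4) * (R / 4) / N`, and `N` lies between `M / 4` and `R / 4`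
  have hbd : (M / 4 ≤ p / 16 ∨ R / 4 ≤ p / 16) ∧ (p / 16 ≤ M / 4 ∨ p / 16 ≤ R / 4) := by
    rcases hmid with ⟨h, h'⟩ | ⟨h, h'⟩
    · have e₁ := mul_le_mul_of_nonneg_left h' Mp.le
      have e₂ := mul_le_mul_of_nonneg_right h Rp.le
      exact ⟨.inl (le_of_mul_le_mul_right (by linarith) Np),
        .inr (le_of_mul_le_mul_right (by linarith) Np)⟩
    · have e₁ := mul_le_mul_of_nonneg_left h Mp.le
      have e₂ := mul_le_mul_of_nonneg_right h' Rp.le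
      exact ⟨.inr (le_of_mul_le_mul_right (by linarith) Np),
        .inl (le_of_mul_le_mul_right (by linarith) Np)⟩
  have hgap := core_gap (q := s * k / 2) (P := ∑ i, (c i : ℝ) ^ 2)
    (Q := 4 * ∑ i, (B i * D i : ℝ)) (h₁ := N) (h₂ := p / 16) hs' hl' (by positivity)
    (Finset.sum_nonneg fun i _ => sq_nonneg _)
    (mul_nonneg (by norm_num) (Finset.sum_nonneg fun i _ => by exact_mod_cast hBD i)) Np.le hE
    (by linarith)
    (by rcases hbd.1 with h | h <;>
          linarith [mul_le_mul_of_nonneg_left h (by linarith : (0 : ℝ) ≤ l)])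
    (by linarith)
    (by rcases hbd.2 with h | h <;>
          linarith [mul_le_mul_of_nonneg_left h (by linarith : (0 : ℝ) ≤ l - 1)])
    (by
      have : (l : ℤ) ≤ ∑ i, c i ^ 2 + 4 * ∑ i, B i * D i ∨
          ∑ i, c i ^ 2 + 4 * ∑ i, B i * D i ≤ (l : ℤ) - 1 := by omega
      exact_mod_cast this)
  rw [hlin, neg_sq] at hCS
  exact absurd hCS (not_le.2 hgap)

/-- An odd `x` and a `y` with `x * y ≤ 2l - 3` cannot satisfy `|xN - yR/2| < √s`: as `x ≠ 2y`, one
of `x`, `2y` is larger than the other, the smaller one is at most `l - 1`, and `N`, `R/4` are too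
close to each other (both lie in a range cut out by `l` and `l - 1`) to make up the difference. -/
lemma odd_pair_absurd {s k l : ℕ} {M N R : ℝ} (hs : 0 < s) (hl : 0 < l)
    (G : GapData s k l M N R) {x y : ℤ} (hx : 1 ≤ x) (hy : 1 ≤ y) (hodd : Odd x)
    (hsmall : x * y ≤ 2 * l - 3) (hlo : -√s < x * N - y * (R / 2))
    (hhi : x * N - y * (R / 2) < √s) : False := by
  obtain ⟨Mp, Np, Rp, Mlo, Mhi, Rlo, Rhi, Nlo, Nhi, sM, sN, sR⟩ := G
  have hS : 0 < √(s : ℝ) := Real.sqrt_pos.2 (by exact_mod_cast hs)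
  have hl2 : 2 ≤ l := by
    have : 1 ≤ x * y := by nlinarith
    omega
  have hl2' : (2 : ℝ) ≤ l := by exact_mod_cast hl2
  have hr1 : √(s : ℝ) ≤ √s * √(l - 1) :=
    le_mul_of_one_le_right hS.le (Real.one_le_sqrt.2 (by linarith))
  have hr2 : √(s : ℝ) ≤ √s * √l :=
    le_mul_of_one_le_right hS.le (Real.one_le_sqrt.2 (by linarith))
  obtain ⟨w, hw⟩ := hodd
  rcases (by omega : 2 * y + 1 ≤ x ∨ x + 1 ≤ 2 * y) with hxy | hxy
  · have h2y : 2 * y ≤ l - 1 := by nlinarith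
    have h2y' : (2 * y : ℝ) ≤ l - 1 := by exact_mod_cast h2y
    have hxy' : (2 * y + 1 : ℝ) ≤ x := by exact_mod_cast hxy
    have hy' : (1 : ℝ) ≤ y := by exact_mod_cast hy
    have e₁ := mul_le_mul_of_nonneg_right hxy' Np.le
    have key : N - √s < 2 * y * (R / 4 - N) := by linarith
    have hpos : 0 ≤ R / 4 - N := by
      by_contra! hneg
      have := mul_neg_of_pos_of_neg (by linarith : (0 : ℝ) < 2 * y) hneg
      linarith
    have e₂ := mul_le_mul_of_nonneg_right h2y' hpos
    linarith
  · have h2x : x ≤ l - 1 := by nlinarith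
    have h2x' : (x : ℝ) ≤ l - 1 := by exact_mod_cast h2x
    have hxy' : (x + 1 : ℝ) ≤ 2 * y := by exact_mod_cast hxy
    have hx' : (1 : ℝ) ≤ x := by exact_mod_cast hx
    have e₁ := mul_le_mul_of_nonneg_right hxy' Rp.le
    have key : R / 4 - √s < x * (N - R / 4) := by linarith
    have hpos : 0 ≤ N - R / 4 := by
      by_contra! hneg
      have := mul_neg_of_pos_of_neg (by linarith : (0 : ℝ) < x) hneg
      linarith
    have e₂ := mul_le_mul_of_nonneg_right h2x' hpos
    linarith

/-- If `√m` is the middle one of `√m`, `4√n`, `√r`, then `s(A + k√m)` with `A < k√m + 1` is not a sum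
of squares: `h0` and `h1` compare the coefficients of `1` and `√m` in such a representation. -/
lemma no_rep_M {s k l τ : ℕ} {M N R t A : ℝ} (hs : 0 < s) (hk : 0 < k) (hl : 0 < l)
    (G : GapData s k l M N R) (ht : N * R = t * M)
    (hmid : (4 * N ≤ M ∧ M ≤ R) ∨ (R ≤ M ∧ M ≤ 4 * N)) (hA : A < k * M + 1)
    (a B c D : Fin τ → ℤ) (hpar : ∀ i, B i % 2 = D i % 2)
    (h0 : s * A = ∑ i, ((a i : ℝ) ^ 2 + (B i / 2 * M) ^ 2 + (c i * N) ^ 2 + (D i / 2 * R) ^ 2))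
    (h1 : (s * k : ℝ) = ∑ i, (a i * B i + t * c i * D i : ℝ)) : False := by
  have hs' : (0 : ℝ) < s := by exact_mod_cast hs
  have hk' : (0 : ℝ) < k := by exact_mod_cast hk
  have hl' : (1 : ℝ) ≤ l := by exact_mod_cast hl
  have hSS : √(s : ℝ) ^ 2 = s := Real.sq_sqrt hs'.le
  have hS : 0 < √(s : ℝ) := Real.sqrt_pos.2 hs'
  obtain ⟨Mp, Np, Rp, Mlo, Mhi, Rlo, Rhi, Nlo, Nhi, sM, sN, sR⟩ := id G
  set E := ∑ i, ((a i - B i / 2 * M : ℝ) ^ 2 + (c i * N - D i / 2 * R : ℝ) ^ 2) with hEdef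
  have hE : E < s := by
    have : E = s * A - M * (s * k) := by
      rw [h0, h1, hEdef, Finset.mul_sum, ← Finset.sum_sub_distrib]
      refine Finset.sum_congr rfl fun i _ => ?_
      linear_combination (-(c i * D i : ℝ)) * ht
    rw [this]; nlinarith
  have hterm : ∀ i, (a i - B i / 2 * M : ℝ) ^ 2 + (c i * N - D i / 2 * R : ℝ) ^ 2 ≤ E := fun i =>
    Finset.single_le_sum (f := fun i => (a i - B i / 2 * M : ℝ) ^ 2 + (c i * N - D i / 2 * R : ℝ) ^ 2)
      (fun j _ => by positivity) (Finset.mem_univ i)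
  have hclose : ∀ i, (c i * N - D i * (R / 2) : ℝ) ^ 2 < √s ^ 2 := fun i => by
    rw [hSS]
    have e : (c i * N - D i * (R / 2) : ℝ) = c i * N - D i / 2 * R := by ring
    rw [e]; linarith [hterm i, sq_nonneg (a i - B i / 2 * M : ℝ)]
  have hcD : ∀ i, 0 ≤ c i * D i := fun i =>
    mul_nonneg_of_close sN (by linarith) hS (hclose i)
  have hCS : (∑ i, (B i : ℝ) * (a i - B i / 2 * M)) ^ 2 ≤ (∑ i, (B i : ℝ) ^ 2) * E := by
    refine (Finset.sum_mul_sq_le_sq_mul_sq _ _ _).trans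
      (mul_le_mul_of_nonneg_left ?_ (Finset.sum_nonneg fun i _ => sq_nonneg _))
    exact Finset.sum_le_sum fun i _ => le_add_of_nonneg_right (sq_nonneg _)
  have hlin : ∑ i, (B i : ℝ) * (a i - B i / 2 * M) =
      -((∑ i, (B i : ℝ) ^ 2) * (M / 2) + ((∑ i, (c i * D i : ℝ)) / 2) * (2 * t) - s * k) := by
    rw [h1, Finset.sum_div, Finset.sum_mul, Finset.sum_mul,
      ← Finset.sum_add_distrib, ← Finset.sum_sub_distrib, ← Finset.sum_neg_distrib]
    refine Finset.sum_congr rfl fun i _ => ?_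
    ring
  -- `2 * t = (2 * N) * (R / 2) / (M / 2)`, and `M / 2` lies between `2 * N` and `R / 2`
  have hbd : (2 * N ≤ 2 * t ∨ R / 2 ≤ 2 * t) ∧ (2 * t ≤ 2 * N ∨ 2 * t ≤ R / 2) := by
    rcases hmid with ⟨h, h'⟩ | ⟨h, h'⟩
    · have e₁ := mul_le_mul_of_nonneg_left h' Np.le
      have e₂ := mul_le_mul_of_nonneg_right h Rp.le
      exact ⟨.inl (le_of_mul_le_mul_right (by linarith) Mp),
        .inr (le_of_mul_le_mul_right (by linarith) Mp)⟩
    · have e₁ := mul_le_mul_of_nonneg_left h Np.le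
      have e₂ := mul_le_mul_of_nonneg_right h' Rp.le
      exact ⟨.inr (le_of_mul_le_mul_right (by linarith) Mp),
        .inl (le_of_mul_le_mul_right (by linarith) Mp)⟩
  have hSl : 0 ≤ √(s : ℝ) * √l := by positivity
  have hSl' : 0 ≤ √(s : ℝ) * √(l - 1) := by positivity
  -- The sum on the left is a half-integer, and an integer once all `c i * D i` are even. An odd
  -- `c i * D i` forces `B i` to be odd, hence nonzero, which bounds `c i * D i` by `2 * l - 3`.
  have hdich : (l : ℝ) ≤ ∑ i, (B i : ℝ) ^ 2 + (∑ i, (c i * D i : ℝ)) / 2 ∨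
      ∑ i, (B i : ℝ) ^ 2 + (∑ i, (c i * D i : ℝ)) / 2 ≤ l - 1 := by
    have hZ : 2 * (l : ℤ) ≤ 2 * ∑ i, B i ^ 2 + ∑ i, c i * D i ∨
        2 * ∑ i, B i ^ 2 + ∑ i, c i * D i ≤ 2 * ((l : ℤ) - 1) := by
      by_contra! hcon
      obtain ⟨hup, hdown⟩ := hcon
      have heven : ∀ i, 2 ∣ c i * D i := by
        intro i
        by_contra hodd
        have hodd' : Odd (c i * D i) := by
          rwa [← Int.not_even_iff_odd, even_iff_two_dvd]
        obtain ⟨hc, hD⟩ := Int.odd_mul.1 hodd'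
        have hB : 1 ≤ B i ^ 2 := by
          have : B i ≠ 0 := by
            have := hpar i
            rw [Int.odd_iff] at hD
            omega
          have := sq_pos_of_ne_zero this
          omega
        have hBsum : B i ^ 2 ≤ ∑ i, B i ^ 2 :=
          Finset.single_le_sum (f := fun i => B i ^ 2) (fun j _ => sq_nonneg _)
            (Finset.mem_univ i)
        have hcDsum : c i * D i ≤ ∑ i, c i * D i :=
          Finset.single_le_sum (f := fun i => c i * D i) (fun j _ => hcD j)
            (Finset.mem_univ i)
        have hsmall : |c i| * |D i| ≤ 2 * l - 3 := by
          rw [← abs_mul, abs_of_nonneg (hcD i)]; omega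
        have hcl : (|c i| * N - |D i| * (R / 2) : ℝ) ^ 2 < √s ^ 2 := by
          refine lt_of_le_of_lt ?_ (hclose i)
          have e : (|(c i : ℝ)| * |(D i : ℝ)|) = c i * D i := by
            rw [← abs_mul, abs_of_nonneg]; exact_mod_cast hcD i
          push_cast
          refine le_of_eq ?_
          linear_combination N ^ 2 * sq_abs (c i : ℝ) + R ^ 2 / 4 * sq_abs (D i : ℝ) - N * R * e
        have hcl' := abs_lt_of_sq_lt_sq' hcl hS.le
        have hc1 : 1 ≤ |c i| := Int.one_le_abs (by rintro h; simp [h] at hc)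
        have hD1 : 1 ≤ |D i| := Int.one_le_abs (by rintro h; simp [h] at hD)
        have hc2 : Odd |c i| := odd_abs.2 hc
        exact odd_pair_absurd hs hl G hc1 hD1 hc2 hsmall hcl'.1 hcl'.2
      have := Finset.dvd_sum (s := Finset.univ) fun i _ => heven i
      omega
    rcases hZ with h | h
    · left
      have h' : (2 * l : ℝ) ≤ 2 * ∑ i, (B i : ℝ) ^ 2 + ∑ i, (c i * D i : ℝ) := by exact_mod_cast h
      linarith
    · right
      have h' : 2 * ∑ i, (B i : ℝ) ^ 2 + ∑ i, (c i * D i : ℝ) ≤ 2 * (l - 1) := by exact_mod_cast h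
      linarith
  have hgap := core_gap (q := s * k) (P := ∑ i, (B i : ℝ) ^ 2)
    (Q := (∑ i, (c i * D i : ℝ)) / 2) (h₁ := M / 2) (h₂ := 2 * t) hs' hl' (by positivity)
    (Finset.sum_nonneg fun i _ => sq_nonneg _)
    (div_nonneg (Finset.sum_nonneg fun i _ => by exact_mod_cast hcD i) (by norm_num))
    (by linarith) hE Mlo
    (by rcases hbd.1 with h | h <;>
          linarith [mul_le_mul_of_nonneg_left h (by linarith : (0 : ℝ) ≤ l)])
    Mhi
    (by rcases hbd.2 with h | h <;>
          linarith [mul_le_mul_of_nonneg_left h (by linarith : (0 : ℝ) ≤ l - 1)])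
    hdich
  rw [hlin, neg_sq] at hCS
  exact absurd hCS (not_le.2 hgap)

/-! ### Arithmetic of the biquadratic field -/

/-- The factorizations `m = g p`, `n = g t`, `r = p t` (with `g = gcd(m, n)`) behind the three
quadratic subfields, together with the congruences and squarefreeness used for the integral basis. -/
structure Biquad (m n r g p t : ℕ) : Prop where
  hm : m = g * p
  hn : n = g * t
  hr : r = p * t
  m4 : m % 4 = 2
  n4 : n % 4 = 3
  r4 : r % 4 = 2
  p2 : p % 2 = 0
  sqm : Squarefree m
  sqn : Squarefree n
  sqr : Squarefree r

namespace Biquad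

lemma of_gcd {m n r : ℕ} (hsm : Squarefree m) (hsn : Squarefree n)
    (hr : r = m * n / Nat.gcd m n ^ 2) (hm4 : m % 4 = 2) (hn4 : n % 4 = 3) :
    ∃ g p t, Biquad m n r g p t := by
  have hgpos : 0 < Nat.gcd m n := Nat.gcd_pos_of_pos_left _ (by omega)
  obtain ⟨p, t, hcop, hm, hn⟩ := Nat.exists_coprime m n
  set g := Nat.gcd m n with hg
  clear_value g
  have hr' : r = p * t := by
    rw [hr]
    refine Nat.div_eq_of_eq_mul_left (by positivity) ?_
    nth_rw 1 [hm]; nth_rw 1 [hn]; ring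
  have hp : Squarefree p := hsm.squarefree_of_dvd ⟨g, hm⟩
  have ht : Squarefree t := hsn.squarefree_of_dvd ⟨g, hn⟩
  have hg2 : g % 2 = 1 := by
    rcases Nat.mod_two_eq_zero_or_one g with h | h
    · have : n % 2 = 0 := by rw [hn, Nat.mul_mod, h]; simp
      omega
    · exact h
  have ht2 : t % 2 = 1 := by
    rcases Nat.mod_two_eq_zero_or_one t with h | h
    · have : n % 2 = 0 := by rw [hn, Nat.mul_mod, h]; simp
      omega
    · exact h
  have hp4 : p % 4 = 2 := by
    have h1 : p % 4 = 0 ∨ p % 4 = 1 ∨ p % 4 = 2 ∨ p % 4 = 3 := by omega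
    have h2 : g % 4 = 1 ∨ g % 4 = 3 := by omega
    rw [hm, Nat.mul_mod] at hm4
    rcases h1 with h1 | h1 | h1 | h1 <;> rcases h2 with h2 | h2 <;> simp [h1, h2] at hm4 ⊢
  refine ⟨g, p, t, by rw [hm, mul_comm], by rw [hn, mul_comm], hr', hm4, hn4, ?_, by omega,
    hsm, hsn, ?_⟩
  · have h2 : t % 4 = 1 ∨ t % 4 = 3 := by omega
    rw [hr', Nat.mul_mod, hp4]
    rcases h2 with h2 | h2 <;> simp [h2]
  · rw [hr']
    exact (Nat.squarefree_mul_iff).2 ⟨hcop, hp, ht⟩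

lemma not_isSquare_of_mod {d : ℕ} (h : d % 4 = 2 ∨ d % 4 = 3) : ¬ IsSquare d := by
  rintro ⟨x, rfl⟩
  have : x % 4 = 0 ∨ x % 4 = 1 ∨ x % 4 = 2 ∨ x % 4 = 3 := by omega
  rcases this with h' | h' | h' | h' <;> simp [Nat.mul_mod, h'] at h

lemma irrational_sqrt_of_mod {d : ℕ} (h : d % 4 = 2 ∨ d % 4 = 3) : Irrational √(d : ℝ) :=
  irrational_sqrt_natCast_iff.2 (not_isSquare_of_mod h)

lemma eq_zero_of_irrational {x y : ℚ} {X : ℝ} (hX : Irrational X) (h : (x : ℝ) + y * X = 0) :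
    x = 0 ∧ y = 0 := by
  have hy : y = 0 := by
    by_contra hy
    refine hX ⟨-x / y, ?_⟩
    have : (y : ℝ) ≠ 0 := by exact_mod_cast hy
    push_cast
    field_simp
    linarith
  subst hy
  simpa using h

variable {m n r g p t : ℕ}

lemma sqrt_mul_mn (H : Biquad m n r g p t) : √(m : ℝ) * √n = g * √r := by
  rw [H.hm, H.hn, H.hr, ← Real.sqrt_mul (by positivity)]
  push_cast
  rw [show (g * p * (g * t) : ℝ) = g ^ 2 * (p * t) by ring, Real.sqrt_mul (by positivity),
    Real.sqrt_sq (by positivity)]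

lemma sqrt_mul_mr (H : Biquad m n r g p t) : √(m : ℝ) * √r = p * √n := by
  rw [H.hm, H.hn, H.hr, ← Real.sqrt_mul (by positivity)]
  push_cast
  rw [show (g * p * (p * t) : ℝ) = p ^ 2 * (g * t) by ring, Real.sqrt_mul (by positivity),
    Real.sqrt_sq (by positivity)]

lemma sqrt_mul_nr (H : Biquad m n r g p t) : √(n : ℝ) * √r = t * √m := by
  rw [H.hm, H.hn, H.hr, ← Real.sqrt_mul (by positivity)]
  push_cast
  rw [show (g * t * (p * t) : ℝ) = t ^ 2 * (g * p) by ring, Real.sqrt_mul (by positivity),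
    Real.sqrt_sq (by positivity)]

/-- Linear independence of `1, √m, √n, √r` over `ℚ`. Multiplying the relation by its three conjugates
gives relations in each quadratic subfield, whose rational parts combine to
`a² = m b² = n c² = r d²`. -/
lemma indep (H : Biquad m n r g p t) {a b c d : ℚ}
    (h : (a + b * √m + c * √n + d * √r : ℝ) = 0) : a = 0 ∧ b = 0 ∧ c = 0 ∧ d = 0 := by
  have hM := irrational_sqrt_of_mod (.inl H.m4)
  have hN := irrational_sqrt_of_mod (.inr H.n4)
  have hR := irrational_sqrt_of_mod (.inl H.r4)
  have eM : √(m : ℝ) ^ 2 = m := Real.sq_sqrt (by positivity)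
  have eN : √(n : ℝ) ^ 2 = n := Real.sq_sqrt (by positivity)
  have eR : √(r : ℝ) ^ 2 = r := Real.sq_sqrt (by positivity)
  have e₁ := H.sqrt_mul_mn
  have e₂ := H.sqrt_mul_mr
  have e₃ := H.sqrt_mul_nr
  have k₁ := (eq_zero_of_irrational (x := a ^ 2 + m * b ^ 2 - n * c ^ 2 - r * d ^ 2)
    (y := 2 * a * b - 2 * t * c * d) hM (by
      push_cast
      linear_combination (a + b * √m - c * √n - d * √r : ℝ) * h - (b : ℝ) ^ 2 * eM
        + (c : ℝ) ^ 2 * eN + (d : ℝ) ^ 2 * eR + 2 * c * d * e₃)).1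
  have k₂ := (eq_zero_of_irrational (x := a ^ 2 + n * c ^ 2 - m * b ^ 2 - r * d ^ 2)
    (y := 2 * a * c - 2 * p * b * d) hN (by
      push_cast
      linear_combination (a - b * √m + c * √n - d * √r : ℝ) * h + (b : ℝ) ^ 2 * eM
        - (c : ℝ) ^ 2 * eN + (d : ℝ) ^ 2 * eR + 2 * b * d * e₂)).1
  have k₃ := (eq_zero_of_irrational (x := a ^ 2 + r * d ^ 2 - m * b ^ 2 - n * c ^ 2)
    (y := 2 * a * d - 2 * g * b * c) hR (by
      push_cast
      linear_combination (a - b * √m - c * √n + d * √r : ℝ) * h + (b : ℝ) ^ 2 * eM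
        + (c : ℝ) ^ 2 * eN - (d : ℝ) ^ 2 * eR + 2 * b * c * e₁)).1
  have aux : ∀ {D : ℕ} {y : ℚ}, Irrational √(D : ℝ) → a ^ 2 = D * y ^ 2 → a = 0 ∧ y = 0 := by
    intro D y hD hy
    have hDD : √(D : ℝ) ^ 2 = D := Real.sq_sqrt (by positivity)
    have : ((a : ℝ) + y * √D) * (a + (-y : ℚ) * √D) = 0 := by
      have : (a : ℝ) ^ 2 = D * y ^ 2 := by exact_mod_cast hy
      push_cast
      linear_combination this - (y : ℝ) ^ 2 * hDD
    rcases mul_eq_zero.1 this with h | h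
    · exact eq_zero_of_irrational hD h
    · simpa using eq_zero_of_irrational hD h
  exact ⟨(aux hR (by linarith : a ^ 2 = r * d ^ 2)).1, (aux hM (by linarith : a ^ 2 = m * b ^ 2)).2,
    (aux hN (by linarith : a ^ 2 = n * c ^ 2)).2, (aux hR (by linarith : a ^ 2 = r * d ^ 2)).2⟩

/-- Multiplication in coordinates, uniformly in the four conjugations `√m ↦ ε√m`, `√n ↦ δ√n` with
signs `ε`, `δ`. -/
lemma mul_formula (H : Biquad m n r g p t) (a b c d a' b' c' d' : ℚ) (ε δ : ℝ) (hε : ε ^ 2 = 1)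
    (hδ : δ ^ 2 = 1) :
    (a + ε * b * √m + δ * c * √n + ε * δ * d * √r : ℝ) *
      (a' + ε * b' * √m + δ * c' * √n + ε * δ * d' * √r) =
    ((a * a' + m * (b * b') + n * (c * c') + r * (d * d') : ℚ) : ℝ)
      + ε * (a * b' + b * a' + t * (c * d' + d * c') : ℚ) * √m
      + δ * (a * c' + c * a' + p * (b * d' + d * b') : ℚ) * √n
      + ε * δ * (a * d' + d * a' + g * (b * c' + c * b') : ℚ) * √r := by
  have eM : √(m : ℝ) ^ 2 = m := Real.sq_sqrt (by positivity)
  have eN : √(n : ℝ) ^ 2 = n := Real.sq_sqrt (by positivity)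
  have eR : √(r : ℝ) ^ 2 = r := Real.sq_sqrt (by positivity)
  have e₁ := H.sqrt_mul_mn
  have e₂ := H.sqrt_mul_mr
  have e₃ := H.sqrt_mul_nr
  push_cast
  linear_combination (ε ^ 2 * b * b' : ℝ) * eM + (δ ^ 2 * c * c' : ℝ) * eN
    + (ε ^ 2 * δ ^ 2 * d * d' : ℝ) * eR + (ε * δ * (b * c' + c * b') : ℝ) * e₁
    + (ε ^ 2 * δ * (b * d' + d * b') : ℝ) * e₂ + (ε * δ ^ 2 * (c * d' + d * c') : ℝ) * e₃
    + (m * b * b' + δ ^ 2 * r * d * d' + δ * p * √n * (b * d' + d * b') : ℝ) * hε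
    + (n * c * c' + r * d * d' + ε * t * √m * (c * d' + d * c') : ℝ) * hδ

/-- Evaluating an integer polynomial commutes with the conjugations: the coordinates of the value do
not depend on the signs `ε`, `δ`. -/
lemma aeval_conj (H : Biquad m n r g p t) (a b c d : ℚ) (P : ℤ[X]) :
    ∃ a' b' c' d' : ℚ, ∀ ε δ : ℝ, ε ^ 2 = 1 → δ ^ 2 = 1 →
      aeval (a + ε * b * √m + δ * c * √n + ε * δ * d * √r : ℝ) P =
        a' + ε * b' * √m + δ * c' * √n + ε * δ * d' * √r := by
  induction P using Polynomial.induction_on with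
  | C z => exact ⟨z, 0, 0, 0, fun ε δ _ _ => by simp⟩
  | add P Q hP hQ =>
    obtain ⟨a₁, b₁, c₁, d₁, h₁⟩ := hP
    obtain ⟨a₂, b₂, c₂, d₂, h₂⟩ := hQ
    refine ⟨a₁ + a₂, b₁ + b₂, c₁ + c₂, d₁ + d₂, fun ε δ hε hδ => ?_⟩
    rw [map_add, h₁ ε δ hε hδ, h₂ ε δ hε hδ]
    push_cast
    ring
  | monomial k z h =>
    obtain ⟨a₁, b₁, c₁, d₁, h₁⟩ := h
    refine ⟨a₁ * a + m * (b₁ * b) + n * (c₁ * c) + r * (d₁ * d),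
      a₁ * b + b₁ * a + t * (c₁ * d + d₁ * c), a₁ * c + c₁ * a + p * (b₁ * d + d₁ * b),
      a₁ * d + d₁ * a + g * (b₁ * c + c₁ * b), fun ε δ hε hδ => ?_⟩
    rw [pow_succ, ← mul_assoc, map_mul, h₁ ε δ hε hδ, aeval_X]
    exact H.mul_formula _ _ _ _ _ _ _ _ ε δ hε hδ

/-- Conjugates of algebraic integers are integral: by `aeval_conj` and `indep` they are roots of the
same monic polynomial. -/
lemma isIntegral_conj (H : Biquad m n r g p t) {a b c d : ℚ}
    (h : IsIntegral ℤ (a + b * √m + c * √n + d * √r : ℝ)) (ε δ : ℝ) (hε : ε ^ 2 = 1)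
    (hδ : δ ^ 2 = 1) : IsIntegral ℤ (a + ε * b * √m + δ * c * √n + ε * δ * d * √r : ℝ) := by
  obtain ⟨P, hP, hP0⟩ := h
  obtain ⟨a', b', c', d', hconj⟩ := H.aeval_conj a b c d P
  have h1 := hconj 1 1 (by norm_num) (by norm_num)
  simp only [one_mul] at h1
  rw [aeval_def, hP0] at h1
  obtain ⟨rfl, rfl, rfl, rfl⟩ := H.indep h1.symm
  refine ⟨P, hP, ?_⟩
  rw [← aeval_def, hconj ε δ hε hδ]
  simp

lemma isIntegral_of_eq {x y : ℝ} (h : IsIntegral ℤ x) (e : y = x) : IsIntegral ℤ y := e ▸ h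

lemma exists_int_of_isIntegral {x : ℚ} (h : IsIntegral ℤ (x : ℝ)) : ∃ z : ℤ, (z : ℚ) = x := by
  have : IsIntegral ℤ x :=
    (isIntegral_algebraMap_iff (A := ℚ) (B := ℝ) (algebraMap ℚ ℝ).injective).1 h
  exact IsIntegrallyClosed.isIntegral_iff.1 this

lemma exists_int_of_squarefree {D : ℕ} (hD : Squarefree D) {x : ℚ} {z : ℤ} (h : D * x ^ 2 = z) :
    ∃ w : ℤ, (w : ℚ) = x := by
  have hx : (x.den : ℚ) ≠ 0 := by exact_mod_cast x.den_ne_zero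
  have h1 : (D : ℤ) * x.num ^ 2 = z * x.den ^ 2 := by
    have : (D : ℚ) * x.num ^ 2 = z * x.den ^ 2 := by
      rw [← h]; nth_rw 2 [← Rat.num_div_den x]; field_simp
    exact_mod_cast this
  have h2 : x.den ^ 2 ∣ D * x.num.natAbs ^ 2 := by
    have := Int.natAbs_dvd_natAbs.2 (Dvd.intro_left z h1.symm)
    simpa [Int.natAbs_mul, Int.natAbs_pow] using this
  have h3 : x.den ^ 2 ∣ D :=
    Nat.Coprime.dvd_of_dvd_mul_right (Nat.Coprime.pow 2 2 x.reduced.symm) h2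
  have h4 : x.den = 1 := Nat.isUnit_iff.1 (hD x.den (by rwa [← sq]))
  exact ⟨x.num, Rat.coe_int_num_of_den_eq_one h4⟩

/-- The ring of integers of `ℚ(√D)` is `ℤ[√D]` for squarefree `D ≡ 2, 3 (mod 4)`. -/
lemma quad_integers {D : ℕ} (hD : Squarefree D) (hD4 : D % 4 = 2 ∨ D % 4 = 3) {u v : ℚ}
    (h₁ : IsIntegral ℤ (u + v * √D : ℝ)) (h₂ : IsIntegral ℤ (u - v * √D : ℝ)) :
    ∃ U V : ℤ, (U : ℚ) = u ∧ (V : ℚ) = v := by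
  have hDD : √(D : ℝ) ^ 2 = D := Real.sq_sqrt (by positivity)
  obtain ⟨U, hU⟩ := exists_int_of_isIntegral (x := 2 * u) (by
    refine isIntegral_of_eq (h₁.add h₂) ?_; push_cast; ring)
  obtain ⟨z, hz⟩ := exists_int_of_isIntegral (x := u ^ 2 - D * v ^ 2) (by
    refine isIntegral_of_eq (h₁.mul h₂) ?_; push_cast; linear_combination (v : ℝ) ^ 2 * hDD)
  obtain ⟨V, hV⟩ := exists_int_of_squarefree hD (x := 2 * v) (z := U ^ 2 - 4 * z) (by
    push_cast; rw [hU, hz]; ring)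
  have hmod : U ^ 2 - D * V ^ 2 = 4 * z := by
    have : (U : ℚ) ^ 2 - D * V ^ 2 = 4 * z := by rw [hU, hz, hV]; ring
    exact_mod_cast this
  have hev : 2 ∣ U ∧ 2 ∣ V := by
    obtain ⟨e, he⟩ : ∃ e : ℤ, (D : ℤ) = 4 * e + 2 ∨ (D : ℤ) = 4 * e + 3 :=
      ⟨(D / 4 : ℕ), by omega⟩
    rcases Int.even_or_odd' U with ⟨x, rfl | rfl⟩ <;> rcases Int.even_or_odd' V with ⟨y, rfl | rfl⟩
    · exact ⟨⟨x, rfl⟩, ⟨y, rfl⟩⟩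
    all_goals
      exfalso
      rcases he with he | he <;> rw [he] at hmod <;> ring_nf at hmod <;> omega
  obtain ⟨⟨x, rfl⟩, ⟨y, rfl⟩⟩ := hev
  refine ⟨x, y, ?_, ?_⟩
  · push_cast at hU; linarith
  · push_cast at hV; linarith

/-- Coordinates of the integers of `K`. Relative traces to the three quadratic subfields show that
`2a, 2b, 2c, 2d` are integers; the relative norm to `ℚ(√n)` gives the parity conditions. -/
lemma integral_coords (H : Biquad m n r g p t) {a b c d : ℚ}
    (h : IsIntegral ℤ (a + b * √m + c * √n + d * √r : ℝ)) :
    ∃ A B C D : ℤ, B % 2 = D % 2 ∧ a = A ∧ b = B / 2 ∧ c = C ∧ d = D / 2 := by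
  have c₂ := H.isIntegral_conj h 1 (-1) (by norm_num) (by norm_num)
  have c₃ := H.isIntegral_conj h (-1) 1 (by norm_num) (by norm_num)
  have c₄ := H.isIntegral_conj h (-1) (-1) (by norm_num) (by norm_num)
  obtain ⟨a', b', ha, hb⟩ := quad_integers H.sqm (.inl H.m4) (u := 2 * a) (v := 2 * b)
    (by refine isIntegral_of_eq (h.add c₂) ?_; push_cast; ring) (by refine isIntegral_of_eq (c₃.add c₄) ?_; push_cast; ring)
  obtain ⟨_, c', _, hc⟩ := quad_integers H.sqn (.inr H.n4) (u := 2 * a) (v := 2 * c)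
    (by refine isIntegral_of_eq (h.add c₃) ?_; push_cast; ring) (by refine isIntegral_of_eq (c₂.add c₄) ?_; push_cast; ring)
  obtain ⟨_, d', _, hd⟩ := quad_integers H.sqr (.inl H.r4) (u := 2 * a) (v := 2 * d)
    (by refine isIntegral_of_eq (h.add c₄) ?_; push_cast; ring) (by refine isIntegral_of_eq (c₂.add c₃) ?_; push_cast; ring)
  have eM : √(m : ℝ) ^ 2 = m := Real.sq_sqrt (by positivity)
  have eN : √(n : ℝ) ^ 2 = n := Real.sq_sqrt (by positivity)
  have eR : √(r : ℝ) ^ 2 = r := Real.sq_sqrt (by positivity)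
  have e₂ := H.sqrt_mul_mr
  obtain ⟨U, V, hU, hV⟩ := quad_integers H.sqn (.inr H.n4)
    (u := a ^ 2 + n * c ^ 2 - m * b ^ 2 - r * d ^ 2) (v := 2 * a * c - 2 * p * b * d)
    (by
      refine isIntegral_of_eq (h.mul c₃) ?_; push_cast
      linear_combination (b : ℝ) ^ 2 * eM - (c : ℝ) ^ 2 * eN + (d : ℝ) ^ 2 * eR + 2 * b * d * e₂)
    (by
      refine isIntegral_of_eq (c₂.mul c₄) ?_; push_cast
      linear_combination (b : ℝ) ^ 2 * eM - (c : ℝ) ^ 2 * eN + (d : ℝ) ^ 2 * eR - 2 * b * d * e₂)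
  have i₁ : a' ^ 2 + n * c' ^ 2 - m * b' ^ 2 - r * d' ^ 2 = 4 * U := by
    have : (a' : ℚ) ^ 2 + n * c' ^ 2 - m * b' ^ 2 - r * d' ^ 2 = 4 * U := by
      rw [ha, hb, hc, hd, hU]; ring
    exact_mod_cast this
  have i₂ : a' * c' - p * b' * d' = 2 * V := by
    have : (a' : ℚ) * c' - p * b' * d' = 2 * V := by
      rw [ha, hb, hc, hd, hV]; ring
    exact_mod_cast this
  obtain ⟨em, hem⟩ : ∃ e : ℤ, (m : ℤ) = 4 * e + 2 := ⟨(m / 4 : ℕ), by have := H.m4; omega⟩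
  obtain ⟨er, her⟩ : ∃ e : ℤ, (r : ℤ) = 4 * e + 2 := ⟨(r / 4 : ℕ), by have := H.r4; omega⟩
  obtain ⟨en, hen⟩ : ∃ e : ℤ, (n : ℤ) = 4 * e + 3 := ⟨(n / 4 : ℕ), by have := H.n4; omega⟩
  obtain ⟨ep, hep⟩ : ∃ e : ℤ, (p : ℤ) = 2 * e := ⟨(p / 2 : ℕ), by have := H.p2; omega⟩
  rw [hem, hen, her] at i₁
  rw [hep] at i₂
  have hac : 2 ∣ a' ∧ 2 ∣ c' := by
    rcases Int.even_or_odd' a' with ⟨x, rfl | rfl⟩ <;> rcases Int.even_or_odd' c' with ⟨y, rfl | rfl⟩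
    · exact ⟨⟨x, rfl⟩, ⟨y, rfl⟩⟩
    · exfalso; ring_nf at i₁; omega
    · exfalso; ring_nf at i₁; omega
    · exfalso; ring_nf at i₂; omega
  obtain ⟨⟨x, rfl⟩, ⟨y, rfl⟩⟩ := hac
  refine ⟨x, b', y, d', ?_, ?_, ?_, ?_, ?_⟩
  · rcases Int.even_or_odd' b' with ⟨z, rfl | rfl⟩ <;>
      rcases Int.even_or_odd' d' with ⟨w, rfl | rfl⟩ <;> first | omega | (exfalso; ring_nf at i₁; omega)
  · push_cast at ha; linarith
  · linarith
  · push_cast at hc; linarith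
  · linarith

end Biquad

/-! ### Coordinates of elements and of sums of squares -/

namespace Biquad

variable {m n r g p t : ℕ}

lemma sqrt_mem_m : √(m : ℝ) ∈ Kbq m n :=
  IntermediateField.subset_adjoin ℚ _ (by simp)

lemma sqrt_mem_n : √(n : ℝ) ∈ Kbq m n :=
  IntermediateField.subset_adjoin ℚ _ (by simp)

lemma sqrt_mem_r (H : Biquad m n r g p t) : √(r : ℝ) ∈ Kbq m n := by
  have hg : (g : ℝ) ≠ 0 := by
    rintro h
    have h' : g = 0 := by exact_mod_cast h
    have := H.m4
    rw [H.hm, h'] at this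
    simp at this
  have e : √(r : ℝ) = √m * √n / g := by rw [H.sqrt_mul_mn]; field_simp
  rw [e]
  exact div_mem (mul_mem sqrt_mem_m sqrt_mem_n) (natCast_mem _ g)

lemma isIntegral_sqrt (d : ℕ) : IsIntegral ℤ √(d : ℝ) := by
  refine IsIntegral.of_pow (n := 2) (by norm_num) ?_
  rw [Real.sq_sqrt (by positivity)]
  exact map_natCast (algebraMap ℤ ℝ) d ▸ isIntegral_algebraMap

lemma exists_coords (H : Biquad m n r g p t) {x : ℝ} (hx : x ∈ Kbq m n) :
    ∃ a b c d : ℚ, x = a + b * √m + c * √n + d * √r := by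
  have hx' : x ∈ Algebra.adjoin ℚ {√(m : ℝ), √(n : ℝ)} := by
    rw [← IntermediateField.adjoin_toSubalgebra_of_isAlgebraic]
    · exact hx
    · have halg (d : ℕ) : IsAlgebraic ℚ √(d : ℝ) :=
        ((isIntegral_sqrt d).tower_top (A := ℚ)).isAlgebraic
      rintro y (rfl | rfl) <;> exact halg _
  induction hx' using Algebra.adjoin_induction with
  | mem y hy =>
    rcases hy with rfl | rfl
    · exact ⟨0, 1, 0, 0, by simp⟩
    · exact ⟨0, 0, 1, 0, by simp⟩
  | algebraMap q => exact ⟨q, 0, 0, 0, by simp⟩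
  | add y z hy hz ihy ihz =>
    have toK : ∀ {w : ℝ}, w ∈ Algebra.adjoin ℚ {√(m : ℝ), √(n : ℝ)} → w ∈ Kbq m n :=
      fun h => IntermediateField.algebra_adjoin_le_adjoin ℚ _ h
    obtain ⟨a₁, b₁, c₁, d₁, h₁⟩ := ihy (toK hy)
    obtain ⟨a₂, b₂, c₂, d₂, h₂⟩ := ihz (toK hz)
    refine ⟨a₁ + a₂, b₁ + b₂, c₁ + c₂, d₁ + d₂, ?_⟩
    rw [h₁, h₂]; push_cast; ring
  | mul y z hy hz ihy ihz =>
    have toK : ∀ {w : ℝ}, w ∈ Algebra.adjoin ℚ {√(m : ℝ), √(n : ℝ)} → w ∈ Kbq m n :=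
      fun h => IntermediateField.algebra_adjoin_le_adjoin ℚ _ h
    obtain ⟨a₁, b₁, c₁, d₁, h₁⟩ := ihy (toK hy)
    obtain ⟨a₂, b₂, c₂, d₂, h₂⟩ := ihz (toK hz)
    have key := H.mul_formula a₁ b₁ c₁ d₁ a₂ b₂ c₂ d₂ 1 1 (by norm_num) (by norm_num)
    simp only [one_mul] at key
    rw [← h₁, ← h₂] at key
    exact ⟨_, _, _, _, key⟩

/-- The coefficients of `1, √m, √n, √r` in a sum of squares of integers of `K`, in terms of the
coordinates of the summands. -/
lemma sumSq_coords (H : Biquad m n r g p t) {u v w z : ℚ}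
    (h : IsSumSqOK m n (u + v * √m + w * √n + z * √r)) :
    ∃ (τ : ℕ) (a B c D : Fin τ → ℤ), (∀ i, B i % 2 = D i % 2) ∧
      (u : ℝ) = ∑ i, ((a i : ℝ) ^ 2 + (B i / 2 * √m) ^ 2 + (c i * √n) ^ 2 + (D i / 2 * √r) ^ 2) ∧
      (v : ℝ) = ∑ i, (a i * B i + t * c i * D i : ℝ) ∧
      (w : ℝ) = ∑ i, (2 * a i * c i + p * B i * D i / 2 : ℝ) ∧
      (z : ℝ) = ∑ i, (a i * D i + g * c i * B i : ℝ) := by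
  obtain ⟨τ, x, hx, hsum⟩ := h
  have hco : ∀ i, ∃ a B c D : ℤ, B % 2 = D % 2 ∧
      x i = a + (B / 2 : ℚ) * √m + c * √n + (D / 2 : ℚ) * √r := by
    intro i
    obtain ⟨a, b, c, d, hi⟩ := H.exists_coords (hx i).1
    have hmemOK := (hx i).2
    rw [hi] at hmemOK
    obtain ⟨A, B, C, D, hpar, rfl, rfl, rfl, rfl⟩ := H.integral_coords hmemOK
    exact ⟨A, B, C, D, hpar, by rw [hi]; push_cast; rfl⟩
  choose a B c D hpar hxi using hco
  have hsq : ∀ i, x i ^ 2 = ((a i ^ 2 + m * (B i / 2) ^ 2 + n * c i ^ 2 + r * (D i / 2) ^ 2 : ℚ) : ℝ)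
      + (a i * B i + t * c i * D i : ℚ) * √m + (2 * a i * c i + p * B i * D i / 2 : ℚ) * √n
      + (a i * D i + g * c i * B i : ℚ) * √r := by
    intro i
    have := H.mul_formula (a i) (B i / 2) (c i) (D i / 2) (a i) (B i / 2) (c i) (D i / 2) 1 1
      (by norm_num) (by norm_num)
    rw [sq, hxi i]
    simp only [one_mul] at this
    push_cast at this ⊢
    rw [this]
    ring
  have hz := H.indep (a := u - ∑ i, (a i ^ 2 + m * (B i / 2) ^ 2 + n * c i ^ 2 + r * (D i / 2) ^ 2 : ℚ))
    (b := v - ∑ i, (a i * B i + t * c i * D i : ℚ))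
    (c := w - ∑ i, (2 * a i * c i + p * B i * D i / 2 : ℚ))
    (d := z - ∑ i, (a i * D i + g * c i * B i : ℚ)) (by
      have e : ∑ i, x i ^ 2 =
          ((∑ i, (a i ^ 2 + m * (B i / 2) ^ 2 + n * c i ^ 2 + r * (D i / 2) ^ 2 : ℚ) : ℚ) : ℝ)
          + (∑ i, (a i * B i + t * c i * D i : ℚ) : ℚ) * √m
          + (∑ i, (2 * a i * c i + p * B i * D i / 2 : ℚ) : ℚ) * √n
          + (∑ i, (a i * D i + g * c i * B i : ℚ) : ℚ) * √r := by
        simp only [Rat.cast_sum, Finset.sum_mul, ← Finset.sum_add_distrib]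
        exact Finset.sum_congr rfl fun i _ => hsq i
      rw [e] at hsum
      simp only [Rat.cast_sub]
      linear_combination hsum)
  obtain ⟨h₁, h₂, h₃, h₄⟩ := hz
  refine ⟨τ, a, B, c, D, hpar, ?_, ?_, ?_, ?_⟩
  · rw [sub_eq_zero.1 h₁, Rat.cast_sum]
    refine Finset.sum_congr rfl fun i _ => ?_
    simp only [mul_pow, Real.sq_sqrt (Nat.cast_nonneg _)]
    push_cast
    ring
  · rw [sub_eq_zero.1 h₂]; push_cast; rfl
  · rw [sub_eq_zero.1 h₃]; push_cast; rfl
  · rw [sub_eq_zero.1 h₄]; push_cast; rfl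

end Biquad

/-! ### The element `A + k√d` and the intervals -/

/-- An embedding sends `√d` to a square root of `d`, which is at least `-√d`. -/
lemma memOK_and_totPos {m n d k A : ℕ} (hd : √(d : ℝ) ∈ Kbq m n) (hA : k * √(d : ℝ) < A) :
    MemOK m n (A + k * √d) ∧ IsTotPos m n (A + k * √d) := by
  have hmem : (A + k * √d : ℝ) ∈ Kbq m n :=
    add_mem (natCast_mem _ A) (mul_mem (natCast_mem _ k) hd)
  have isIntegral_nat (j : ℕ) : IsIntegral ℤ (j : ℝ) :=
    map_natCast (algebraMap ℤ ℝ) j ▸ isIntegral_algebraMap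
  refine ⟨⟨hmem, (isIntegral_nat A).add ((isIntegral_nat k).mul (Biquad.isIntegral_sqrt d))⟩,
    hmem, fun σ => ?_⟩
  have e : (⟨A + k * √d, hmem⟩ : Kbq m n) = A + k * ⟨√d, hd⟩ := by
    ext; simp
  rw [e, map_add, map_mul, map_natCast, map_natCast]
  have hsq : σ ⟨√d, hd⟩ ^ 2 = d := by
    have : (⟨√d, hd⟩ : Kbq m n) ^ 2 = d := by ext; simp
    rw [← map_pow, this, map_natCast]
  have : -√d ≤ σ ⟨√d, hd⟩ := (abs_le.1 (Real.abs_le_sqrt hsq.le)).1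
  have := mul_le_mul_of_nonneg_left this (Nat.cast_nonneg (α := ℝ) k)
  linarith

lemma exists_nat_just_above {k d : ℕ} (hk : 0 < k) (hd : Irrational √(d : ℝ)) :
    ∃ A : ℕ, k * √(d : ℝ) < A ∧ A < k * √(d : ℝ) + 1 := by
  refine ⟨⌊k * √(d : ℝ)⌋₊ + 1, by exact_mod_cast Nat.lt_floor_add_one _, ?_⟩
  have hirr : Irrational (k * √(d : ℝ)) := hd.natCast_mul hk.ne'
  have := (Nat.floor_le (by positivity : 0 ≤ k * √(d : ℝ))).lt_of_ne (hirr.ne_nat _).symm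
  push_cast
  linarith

lemma div_sqrt_mul {S l : ℝ} (hl : 0 < l) : l * (S / √l) = S * √l := by
  have : √l ^ 2 = l := Real.sq_sqrt hl.le
  have h0 : √l ≠ 0 := (Real.sqrt_pos.2 hl).ne'
  field_simp
  linear_combination -S * this

lemma bounds_of_mem_I1 {s k l : ℕ} (hl : 0 < l) {x : ℝ} (h : x ∈ I1 s k l) :
    (s * k : ℝ) + √s * √l ≤ l * (x / 2) ∧ (l - 1 : ℝ) * (x / 2) + √s * √(l - 1) ≤ s * k := by
  have hl0 : (0 : ℝ) < l := by exact_mod_cast hl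
  have lo : ∀ y : ℝ, 2 * (s : ℝ) * k / l + 2 * √s / √l ≤ y →
      (s * k : ℝ) + √s * √l ≤ l * (y / 2) := by
    intro y hy
    have := mul_le_mul_of_nonneg_left hy hl0.le
    rw [mul_add, mul_div_cancel₀ _ hl0.ne', div_sqrt_mul hl0] at this
    linarith
  unfold I1 at h
  split_ifs at h with h1
  · refine ⟨lo x h, ?_⟩
    subst h1
    simp only [Nat.cast_one, sub_self, zero_mul, Real.sqrt_zero, mul_zero, add_zero]
    positivity
  · refine ⟨lo x h.1, ?_⟩
    have hL : (0 : ℝ) < l - 1 := by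
      have : (1 : ℝ) < l := by exact_mod_cast (by omega : 1 < l)
      linarith
    have := mul_le_mul_of_nonneg_left h.2 hL.le
    rw [mul_sub, mul_div_cancel₀ _ hL.ne', div_sqrt_mul hL] at this
    linarith

lemma bounds_of_mem_I2 {s k l : ℕ} (hl : 0 < l) {x : ℝ} (h : x ∈ I2 s k l) :
    (s * k : ℝ) + 2 * (√s * √l) ≤ l * (2 * x) ∧
      (l - 1 : ℝ) * (2 * x) + 2 * (√s * √(l - 1)) ≤ s * k := by
  have hl0 : (0 : ℝ) < l := by exact_mod_cast hl
  have lo : ∀ y : ℝ, (s : ℝ) * k / (2 * l) + √s / √l ≤ y →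
      (s * k : ℝ) + 2 * (√s * √l) ≤ l * (2 * y) := by
    intro y hy
    have := mul_le_mul_of_nonneg_left hy hl0.le
    rw [mul_add, div_sqrt_mul hl0, show (l : ℝ) * (s * k / (2 * l)) = s * k / 2 by field_simp] at this
    linarith
  unfold I2 at h
  split_ifs at h with h1
  · refine ⟨lo x h, ?_⟩
    subst h1
    simp only [Nat.cast_one, sub_self, zero_mul, Real.sqrt_zero, mul_zero, add_zero]
    positivity
  · refine ⟨lo x h.1, ?_⟩
    have hL : (0 : ℝ) < l - 1 := by
      have : (1 : ℝ) < l := by exact_mod_cast (by omega : 1 < l)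
      linarith
    have := mul_le_mul_of_nonneg_left h.2 hL.le
    rw [mul_sub, div_sqrt_mul hL,
      show (l - 1 : ℝ) * (s * k / (2 * (l - 1))) = s * k / 2 by field_simp] at this
    linarith

lemma GapData.of_mem {m n r s k l : ℕ} (hm : 0 < m) (hn : 0 < n) (hr : 0 < r) (hl : 0 < l)
    (hms : s ≤ m) (hns : s ≤ n) (h₁ : √(m : ℝ) ∈ I1 s k l) (h₂ : √(r : ℝ) ∈ I1 s k l)
    (h₃ : √(n : ℝ) ∈ I2 s k l) : GapData s k l √m √n √r := by
  obtain ⟨Mlo, Mhi⟩ := bounds_of_mem_I1 hl h₁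
  obtain ⟨Rlo, Rhi⟩ := bounds_of_mem_I1 hl h₂
  obtain ⟨Nlo, Nhi⟩ := bounds_of_mem_I2 hl h₃
  have sM : √(s : ℝ) ≤ √m := Real.sqrt_le_sqrt (by exact_mod_cast hms)
  have sN : √(s : ℝ) ≤ √n := Real.sqrt_le_sqrt (by exact_mod_cast hns)
  have hl1 : (1 : ℝ) ≤ l := by exact_mod_cast hl
  have hr1 : √(s : ℝ) ≤ √s * √l :=
    le_mul_of_one_le_right (Real.sqrt_nonneg _) (Real.one_le_sqrt.2 hl1)
  have hr2 : 0 ≤ √(s : ℝ) * √(l - 1) := by positivity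
  refine ⟨Real.sqrt_pos.2 (by exact_mod_cast hm), Real.sqrt_pos.2 (by exact_mod_cast hn),
    Real.sqrt_pos.2 (by exact_mod_cast hr), Mlo, Mhi, Rlo, Rhi, Nlo, Nhi, sM, sN, ?_⟩
  -- `l√r ≥ 2s₀k + 2√(s₀l) ≥ (l - 1)√m + 2√s₀ ≥ l√s₀`
  have := mul_le_mul_of_nonneg_left sM (by linarith : (0 : ℝ) ≤ l - 1)
  have h0 := Real.sqrt_nonneg (s : ℝ)
  refine le_of_mul_le_mul_left (a := (l : ℝ)) ?_ (by linarith)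
  linarith

/-- **Proposition 1(1).** If `m ≡ 2 (mod 4)`, `n ≡ 3 (mod 4)`, `m, n ≥ s₀`,
`√m, √r ∈ I₁` and `√n ∈ I₂`, then not all elements of `s₀𝒪_K⁺` are sums of squares. -/
theorem not_all_sums_of_squares_of_mem_I1_I2
    (m n r : ℕ) (hm : 1 < m) (hn : 1 < n) (hmn : m ≠ n)
    (hsm : Squarefree m) (hsn : Squarefree n)
    (hr : r = m * n / Nat.gcd m n ^ 2)
    (s₀ l k : ℕ) (hs₀ : 0 < s₀) (hl : 0 < l) (hk : 0 < k)
    (hm4 : m % 4 = 2) (hn4 : n % 4 = 3)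
    (hms : s₀ ≤ m) (hns : s₀ ≤ n)
    (h₁ : Real.sqrt (m : ℝ) ∈ I1 s₀ k l) (h₂ : Real.sqrt (r : ℝ) ∈ I1 s₀ k l)
    (h₃ : Real.sqrt (n : ℝ) ∈ I2 s₀ k l) :
    ∃ α : ℝ, MemOK m n α ∧ IsTotPos m n α ∧ ¬ IsSumSqOK m n ((s₀ : ℝ) * α) := by
  obtain ⟨g, p, t, H⟩ := Biquad.of_gcd hsm hsn hr hm4 hn4
  have hr4 := H.r4
  have G : GapData s₀ k l √m √n √r :=
    .of_mem (by omega) (by omega) (by omega) hl hms hns h₁ h₂ h₃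
  -- which of `√m`, `4√n`, `√r` is the middle one
  have hcases : ((√(m : ℝ) ≤ 4 * √n ∧ 4 * √n ≤ √r) ∨ (√(r : ℝ) ≤ 4 * √n ∧ 4 * √n ≤ √m)) ∨
      ((4 * √(n : ℝ) ≤ √m ∧ √(m : ℝ) ≤ √r) ∨ (√(r : ℝ) ≤ √m ∧ √m ≤ 4 * √n)) ∨
      ((4 * √(n : ℝ) ≤ √r ∧ √(r : ℝ) ≤ √m) ∨ (√(m : ℝ) ≤ √r ∧ √r ≤ 4 * √n)) := by
    rcases le_total √(m : ℝ) (4 * √n) with a | a <;>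
      rcases le_total √(r : ℝ) (4 * √n) with b | b <;>
      rcases le_total √(m : ℝ) √r with c | c <;> simp [a, b, c]
  rcases hcases with hmid | hmid | hmid
  · obtain ⟨A, hA, hA'⟩ := exists_nat_just_above hk (Biquad.irrational_sqrt_of_mod (.inr H.n4))
    obtain ⟨hmemOK, hpos⟩ := memOK_and_totPos Biquad.sqrt_mem_n hA
    refine ⟨_, hmemOK, hpos, fun hsum => ?_⟩
    obtain ⟨τ, a, B, c, D, hpar, e₀, -, e₂, -⟩ :=
      H.sumSq_coords (u := s₀ * A) (v := 0) (w := s₀ * k) (z := 0)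
        (by convert hsum using 1; push_cast; ring)
    push_cast at e₀ e₂
    exact no_rep_N hs₀ hk hl G H.sqrt_mul_mr hmid hA' a B c D e₀ e₂
  · obtain ⟨A, hA, hA'⟩ := exists_nat_just_above hk (Biquad.irrational_sqrt_of_mod (.inl H.m4))
    obtain ⟨hmemOK, hpos⟩ := memOK_and_totPos Biquad.sqrt_mem_m hA
    refine ⟨_, hmemOK, hpos, fun hsum => ?_⟩
    obtain ⟨τ, a, B, c, D, hpar, e₀, e₁, -, -⟩ :=
      H.sumSq_coords (u := s₀ * A) (v := s₀ * k) (w := 0) (z := 0)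
        (by convert hsum using 1; push_cast; ring)
    push_cast at e₀ e₁
    exact no_rep_M hs₀ hk hl G H.sqrt_mul_nr hmid hA' a B c D hpar e₀ e₁
  · obtain ⟨A, hA, hA'⟩ := exists_nat_just_above hk (Biquad.irrational_sqrt_of_mod (.inl H.r4))
    obtain ⟨hmemOK, hpos⟩ := memOK_and_totPos H.sqrt_mem_r hA
    refine ⟨_, hmemOK, hpos, fun hsum => ?_⟩
    obtain ⟨τ, a, B, c, D, hpar, e₀, -, -, e₃⟩ :=
      H.sumSq_coords (u := s₀ * A) (v := 0) (w := 0) (z := s₀ * k)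
        (by convert hsum using 1; push_cast; ring)
    push_cast at e₀ e₃
    -- `√m` and `√r` exchange their roles
    refine no_rep_M hs₀ hk hl G.symm (by rw [mul_comm, H.sqrt_mul_mn]) hmid hA' a D c B
      (fun i => (hpar i).symm) (e₀.trans ?_) e₃
    exact Finset.sum_congr rfl fun i _ => by ring
end

section
/- Let s₀, l, k be positive integers with l ≡ s₀k (mod 2). Define I₁ = [2s₀k/l + 2√s₀/√l, 2s₀k/(l−1) − 2√s₀/√(l−1)] for l > 1 (right endpoint +∞ for l = 1), and J = [s₀k/l + 2√s₀/√l, s₀k/(l−2) − 2√s₀/√(l−2)] for l > 2 (right endpoint +∞ for l ∈ {1,2}). Suppose m ≡ 2 or 3 (mod 4), n ≡ 1 (mod 4), m ≥ s₀, n ≥ 4s₀, √m ∈ I₁, √r ∈ I₁ and √n ∈ J. Then not all elements of s₀𝒪_K⁺ can be represented as a sum of squares in 𝒪_K; i.e., there exists a totally positive α ∈ 𝒪_K such that s₀α is not a sum of squares of elements of 𝒪_K. -/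
/-!
Let `g = gcd(m, n)`, `m = g m'`, `n = g n'`, so `r = m' n'`; the residues modulo 4 give
`r ≡ m (mod 4)` and show that every element of `𝒪_K` has the form `(a + b√n + c√m + d√r)/2` with
`a ≡ b` and `c ≡ d (mod 2)` (`integer_coords`). Let `e` be the smaller of `m` and `r`, and take
`α = ⌈k√e⌉ + k√e`, which is totally positive because `√e` is irrational. Suppose `e = m` (the
situation is symmetric in `m` and `r`) and `s₀ α = ∑ xᵢ²`.

Comparing coefficients, with `xᵢ = (aᵢ + bᵢ√n + cᵢ√m + dᵢ√r)/2`, gives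
* `∑ (aᵢcᵢ + n' bᵢdᵢ) = 2 s₀ k` and `∑ (aᵢdᵢ + g bᵢcᵢ) = 0`. As `g ≡ n' (mod 4)`, the difference
  of the two sums is `∑ (aᵢ - g bᵢ)(cᵢ - dᵢ) ≡ 0` modulo 4, so `s₀ k`, and hence `l`, is even.
* `V + W = 4 s₀ ⌈k√m⌉ < 4 s₀ k√m + 4 s₀` for `V = ∑ (m cᵢ² + r dᵢ²)`, `W = ∑ (aᵢ² + n bᵢ²)`,
  while by Cauchy–Schwarz `V W ≥ 4 s₀² k² m`.

The number `T = ∑ (cᵢ² + dᵢ²)` is even, so `T ≥ l` or `T ≤ l - 2`. If `T ≥ l`, then `V ≥ m l`;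
if `T ≤ l - 2`, then `V ≤ r (l - 2) ≤ r (l - 1)² / l`. The condition `√m, √r ∈ I₁` puts `V` so far
from the minimum `V = 2 s₀ k√m` of `V + 4 s₀² k² m / V` that the second item is violated (`core`).
-/

open Polynomial

/-! ### Arithmetic of `m, n, r` and linear independence of the square roots -/

/-- The arithmetic of the biquadratic field: `g = gcd(m, n)`, `m = g m'`, `n = g n'` and
`r = m' n'`, with `m, n, r` squarefree and the congruence conditions modulo 4. That `g` is the
gcd is encoded by `r` being squarefree, which makes `m'` and `n'` coprime. -/
structure BiquadData (m n r g m' n' : ℕ) : Prop where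
  hm : m = g * m'
  hn : n = g * n'
  hr : r = m' * n'
  sm : Squarefree m
  sn : Squarefree n
  sr : Squarefree r
  n1 : n ≠ 1
  n4 : n % 4 = 1
  m4 : m % 4 = 2 ∨ m % 4 = 3
  r4 : r % 4 = m % 4

theorem biquadData_gcd {m n r : ℕ} (hm : 1 < m) (hn : 1 < n)
    (hsm : Squarefree m) (hsn : Squarefree n) (hr : r = m * n / Nat.gcd m n ^ 2)
    (hm4 : m % 4 = 2 ∨ m % 4 = 3) (hn4 : n % 4 = 1) :
    ∃ g m' n', BiquadData m n r g m' n' := by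
  have hg : 0 < Nat.gcd m n := Nat.gcd_pos_of_pos_left _ (by omega)
  obtain ⟨m', hm'⟩ := Nat.gcd_dvd_left m n
  obtain ⟨n', hn'⟩ := Nat.gcd_dvd_right m n
  have hcop : Nat.Coprime m' n' := by
    have h := Nat.coprime_div_gcd_div_gcd (m := m) (n := n) hg
    rwa [Nat.div_eq_of_eq_mul_right hg hm', Nat.div_eq_of_eq_mul_right hg hn'] at h
  generalize Nat.gcd m n = g at *
  have hr' : r = m' * n' := by
    rw [hr]
    apply Nat.div_eq_of_eq_mul_right (by positivity)
    nth_rewrite 1 [hm']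
    nth_rewrite 1 [hn']
    ring
  have hgo : g % 2 = 1 := by
    by_contra h
    have : 2 ∣ n := by rw [hn']; exact Dvd.dvd.mul_right (by omega) _
    omega
  have hg4 : g * g % 4 = 1 := by
    have : g % 4 = 1 ∨ g % 4 = 3 := by omega
    rcases this with h | h <;> simp [Nat.mul_mod, h]
  refine ⟨g, m', n', hm', hn', hr', hsm, hsn, ?_, by omega, hn4, hm4, ?_⟩
  · rw [hr', Nat.squarefree_mul_iff]
    exact ⟨hcop, hsm.squarefree_of_dvd ⟨g, by rw [hm']; ring⟩,
      hsn.squarefree_of_dvd ⟨g, by rw [hn']; ring⟩⟩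
  · have h : r * (g * g) = m * n := by
      rw [hr', hm', hn']; ring
    have h2 := congrArg (· % 4) h
    simp only [Nat.mul_mod r, Nat.mul_mod m, hg4, hn4] at h2
    simpa using h2

theorem rat_lin2 {d : ℕ} (hd : Squarefree d) (h1 : d ≠ 1) (P Q : ℚ)
    (h : (P : ℝ) + Q * √(d : ℝ) = 0) : P = 0 ∧ Q = 0 := by
  have hirr : Irrational √(d : ℝ) := by
    rw [irrational_sqrt_natCast_iff]
    rintro ⟨e, he⟩
    have : IsUnit e := hd e (by rw [he])
    rw [Nat.isUnit_iff] at this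
    subst this
    exact h1 (by simpa using he)
  have hQ : Q = 0 := by
    by_contra hQ
    apply hirr
    refine ⟨-P / Q, ?_⟩
    have : (Q : ℝ) ≠ 0 := by exact_mod_cast hQ
    push_cast
    field_simp
    linarith
  subst hQ
  simpa using h

namespace BiquadData

variable {m n r g m' n' : ℕ}

theorem m1 (H : BiquadData m n r g m' n') : m ≠ 1 := by
  have := H.m4; omega

theorem r1 (H : BiquadData m n r g m' n') : r ≠ 1 := by
  have := H.m4; have := H.r4; omega

/-- Multiplication table of the square roots. -/
theorem table (H : BiquadData m n r g m' n') :
    √(m : ℝ) * √(m : ℝ) = m ∧ √(n : ℝ) * √(n : ℝ) = n ∧ √(r : ℝ) * √(r : ℝ) = r ∧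
    √(m : ℝ) * √(n : ℝ) = g * √(r : ℝ) ∧ √(m : ℝ) * √(r : ℝ) = m' * √(n : ℝ) ∧
    √(n : ℝ) * √(r : ℝ) = n' * √(m : ℝ) := by
  obtain ⟨hm, hn, hr, -⟩ := H
  refine ⟨Real.mul_self_sqrt (by positivity), Real.mul_self_sqrt (by positivity),
    Real.mul_self_sqrt (by positivity), ?_, ?_, ?_⟩ <;> subst hm hn hr <;> push_cast <;>
    rw [Real.sqrt_mul (by positivity), Real.sqrt_mul (by positivity),
      Real.sqrt_mul (by positivity)]
  · linear_combination (√(m' : ℝ) * √(n' : ℝ)) * Real.mul_self_sqrt (Nat.cast_nonneg (α := ℝ) g)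
  · linear_combination (√(g : ℝ) * √(n' : ℝ)) * Real.mul_self_sqrt (Nat.cast_nonneg (α := ℝ) m')
  · linear_combination (√(g : ℝ) * √(m' : ℝ)) * Real.mul_self_sqrt (Nat.cast_nonneg (α := ℝ) n')

/-- Linear independence of `1, √m, √n, √r` over `ℚ`: moving two of the four terms to the other
side and squaring, in the three possible ways, gives three linear relations between
`p²`, `m q²`, `n u²`, `r v²`, which make all four equal. -/
theorem lin4 (H : BiquadData m n r g m' n') (p q u v : ℚ)
    (h : (p : ℝ) + q * √(m : ℝ) + u * √(n : ℝ) + v * √(r : ℝ) = 0) :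
    p = 0 ∧ q = 0 ∧ u = 0 ∧ v = 0 := by
  obtain ⟨hmm, hnn, hrr, hmn, hmr, hnr⟩ := H.table
  have e1 := (rat_lin2 H.sm H.m1 (p ^ 2 + m * q ^ 2 - n * u ^ 2 - r * v ^ 2)
    (2 * p * q - 2 * n' * u * v) (by
      push_cast
      linear_combination ((p : ℝ) + q * √(m : ℝ) - u * √(n : ℝ) - v * √(r : ℝ)) * h
        - q ^ 2 * hmm + u ^ 2 * hnn + v ^ 2 * hrr + 2 * u * v * hnr)).1
  have e2 := (rat_lin2 H.sn H.n1 (p ^ 2 + n * u ^ 2 - m * q ^ 2 - r * v ^ 2)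
    (2 * p * u - 2 * m' * q * v) (by
      push_cast
      linear_combination ((p : ℝ) + u * √(n : ℝ) - q * √(m : ℝ) - v * √(r : ℝ)) * h
        + q ^ 2 * hmm - u ^ 2 * hnn + v ^ 2 * hrr + 2 * q * v * hmr)).1
  have e3 := (rat_lin2 H.sr H.r1 (p ^ 2 + r * v ^ 2 - m * q ^ 2 - n * u ^ 2)
    (2 * p * v - 2 * g * q * u) (by
      push_cast
      linear_combination ((p : ℝ) + v * √(r : ℝ) - q * √(m : ℝ) - u * √(n : ℝ)) * h
        + q ^ 2 * hmm + u ^ 2 * hnn - v ^ 2 * hrr + 2 * q * u * hmn)).1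
  have hpq : p ^ 2 = m * q ^ 2 := by linarith
  have hpu : p ^ 2 = n * u ^ 2 := by linarith
  have hpv : p ^ 2 = r * v ^ 2 := by linarith
  have hp : p = 0 := by
    have hR : (p : ℝ) ^ 2 = (q * √(m : ℝ)) ^ 2 := by
      have : (p : ℝ) ^ 2 = m * q ^ 2 := by exact_mod_cast hpq
      linear_combination this - q ^ 2 * hmm
    rcases sq_eq_sq_iff_eq_or_eq_neg.mp hR with h | h
    · exact (rat_lin2 H.sm H.m1 p (-q) (by push_cast; linarith)).1
    · exact (rat_lin2 H.sm H.m1 p q (by linarith)).1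
  have m0 : (m : ℚ) ≠ 0 := by exact_mod_cast H.sm.ne_zero
  have n0 : (n : ℚ) ≠ 0 := by exact_mod_cast H.sn.ne_zero
  have r0 : (r : ℚ) ≠ 0 := by exact_mod_cast H.sr.ne_zero
  subst hp
  refine ⟨rfl, ?_, ?_, ?_⟩
  · simpa [m0] using hpq.symm
  · simpa [n0] using hpu.symm
  · simpa [r0] using hpv.symm

end BiquadData

/-! ### Conjugates -/

/-- `x = p + q√m + u√n + v√r` with rational coefficients, and `y` is its image under
`√m ↦ ε√m`, `√n ↦ δ√n`. -/
def ConjPair (m n r : ℕ) (ε δ : ℤ) (x y : ℝ) : Prop :=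
  ∃ p q u v : ℚ, x = p + q * √(m : ℝ) + u * √(n : ℝ) + v * √(r : ℝ) ∧
    y = p + ε * q * √(m : ℝ) + δ * u * √(n : ℝ) + ε * δ * v * √(r : ℝ)

namespace ConjPair

variable {m n r g m' n' : ℕ} {ε δ : ℤ} {x y x' y' : ℝ}

theorem ratCast (c : ℚ) : ConjPair m n r ε δ c c := ⟨c, 0, 0, 0, by simp, by simp⟩

theorem add (h : ConjPair m n r ε δ x y) (h' : ConjPair m n r ε δ x' y') :
    ConjPair m n r ε δ (x + x') (y + y') := by
  obtain ⟨p, q, u, v, rfl, rfl⟩ := h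
  obtain ⟨p', q', u', v', rfl, rfl⟩ := h'
  exact ⟨p + p', q + q', u + u', v + v', by push_cast; ring, by push_cast; ring⟩

theorem mul (H : BiquadData m n r g m' n') (hε : ε ^ 2 = 1) (hδ : δ ^ 2 = 1)
    (h : ConjPair m n r ε δ x y) (h' : ConjPair m n r ε δ x' y') :
    ConjPair m n r ε δ (x * x') (y * y') := by
  obtain ⟨p, q, u, v, rfl, rfl⟩ := h
  obtain ⟨a, b, c, d, rfl, rfl⟩ := h'
  obtain ⟨hmm, hnn, hrr, hmn, hmr, hnr⟩ := H.table
  have hε' : (ε : ℝ) ^ 2 = 1 := by exact_mod_cast hε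
  have hδ' : (δ : ℝ) ^ 2 = 1 := by exact_mod_cast hδ
  refine ⟨p * a + m * (q * b) + n * (u * c) + r * (v * d),
    p * b + q * a + n' * (u * d + v * c), p * c + u * a + m' * (q * d + v * b),
    p * d + v * a + g * (q * c + u * b), ?_, ?_⟩
  · push_cast
    linear_combination (q * b : ℝ) * hmm + (u * c : ℝ) * hnn + (v * d : ℝ) * hrr +
      (q * c + u * b : ℝ) * hmn + (q * d + v * b : ℝ) * hmr + (u * d + v * c : ℝ) * hnr
  · push_cast
    linear_combination (ε ^ 2 * q * b : ℝ) * hmm + (δ ^ 2 * u * c : ℝ) * hnn +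
      (ε ^ 2 * δ ^ 2 * v * d : ℝ) * hrr + (ε * δ * (q * c + u * b) : ℝ) * hmn +
      (ε ^ 2 * δ * (q * d + v * b) : ℝ) * hmr + (ε * δ ^ 2 * (u * d + v * c) : ℝ) * hnr +
      (m * q * b + δ ^ 2 * r * v * d + δ * m' * √(n : ℝ) * (q * d + v * b)) * hε' +
      (n * u * c + r * v * d + ε * n' * √(m : ℝ) * (u * d + v * c)) * hδ'

theorem aeval (H : BiquadData m n r g m' n') (hε : ε ^ 2 = 1) (hδ : δ ^ 2 = 1)
    (h : ConjPair m n r ε δ x y) (P : ℤ[X]) :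
    ConjPair m n r ε δ (Polynomial.aeval x P) (Polynomial.aeval y P) := by
  induction P using Polynomial.induction_on' with
  | add P Q hP hQ => simpa using hP.add hQ
  | monomial k c =>
    simp only [Polynomial.aeval_monomial]
    have hc : ConjPair m n r ε δ (algebraMap ℤ ℝ c) (algebraMap ℤ ℝ c) := by
      simpa using ratCast (m := m) (n := n) (r := r) (ε := ε) (δ := δ) (c : ℚ)
    refine mul H hε hδ hc ?_
    induction k with
    | zero => simpa using ratCast (m := m) (n := n) (r := r) (ε := ε) (δ := δ) 1
    | succ k ih => rw [pow_succ, pow_succ]; exact mul H hε hδ ih h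

/-- A conjugate satisfies the same integral equation: the conjugate of `0` is `0` by linear
independence of `1, √m, √n, √r`. -/
theorem isIntegral (H : BiquadData m n r g m' n') (hε : ε ^ 2 = 1) (hδ : δ ^ 2 = 1)
    (h : ConjPair m n r ε δ x y) (hx : IsIntegral ℤ x) : IsIntegral ℤ y := by
  obtain ⟨P, hP, hPx⟩ := hx
  refine ⟨P, hP, ?_⟩
  rw [← Polynomial.aeval_def] at hPx ⊢
  obtain ⟨p, q, u, v, e, e'⟩ := aeval H hε hδ h P
  rw [hPx] at e
  obtain ⟨rfl, rfl, rfl, rfl⟩ := H.lin4 p q u v e.symm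
  simpa using e'

end ConjPair

/-! ### Coordinates of elements of the ring of integers -/

theorem exists_rat_coords {m n r g m' n' : ℕ} (H : BiquadData m n r g m' n') {x : ℝ}
    (hx : x ∈ Kbq m n) :
    ∃ p q u v : ℚ, x = p + q * √(m : ℝ) + u * √(n : ℝ) + v * √(r : ℝ) := by
  have hsq : ∀ d : ℕ, IsAlgebraic ℚ √(d : ℝ) := fun d => by
    apply IsIntegral.isAlgebraic
    exact IsIntegral.of_pow (n := 2) (by norm_num)
      (by rw [Real.sq_sqrt (by positivity)]; exact isIntegral_algebraMap (x := (d : ℚ)))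
  have hx' : x ∈ (Kbq m n).toSubalgebra := hx
  rw [Kbq, IntermediateField.adjoin_toSubalgebra_of_isAlgebraic] at hx'
  swap
  · rintro y (rfl | rfl) <;> exact hsq _
  have key : ConjPair m n r 1 1 x x := by
    clear hx
    induction hx' using Algebra.adjoin_induction with
    | mem y hy =>
      rcases hy with rfl | rfl
      · exact ⟨0, 1, 0, 0, by simp, by simp⟩
      · exact ⟨0, 0, 1, 0, by simp, by simp⟩
    | algebraMap c => simpa using ConjPair.ratCast c
    | add a b _ _ ha hb => exact ha.add hb
    | mul a b _ _ ha hb => exact ConjPair.mul H (by norm_num) (by norm_num) ha hb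
  obtain ⟨p, q, u, v, h, -⟩ := key
  exact ⟨p, q, u, v, h⟩

theorem exists_int_of_isIntegral_rat {c : ℚ} {x : ℝ} (hx : IsIntegral ℤ x) (h : x = c) :
    ∃ z : ℤ, c = z := by
  subst h
  have h2 : IsIntegral ℤ c :=
    (isIntegral_algebraMap_iff (R := ℤ) (A := ℚ) (B := ℝ) (algebraMap ℚ ℝ).injective).mp
      (by simpa using hx)
  obtain ⟨z, hz⟩ := IsIntegrallyClosed.isIntegral_iff.mp h2
  exact ⟨z, by simpa using hz.symm⟩

theorem exists_int_of_squarefree_mul_sq {d : ℕ} (hd : Squarefree d) {c : ℚ} {z : ℤ}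
    (h : d * c ^ 2 = z) : ∃ w : ℤ, c = w := by
  -- `d c` is a root of `X² - d z`, hence an integer `w`, and `w² = d z` forces `d ∣ w`.
  have hint : IsIntegral ℤ ((d : ℚ) * c) := by
    apply IsIntegral.of_pow (n := 2) (by norm_num)
    have : ((d : ℚ) * c) ^ 2 = algebraMap ℤ ℚ (d * z) := by
      push_cast [algebraMap_int_eq, Int.coe_castRingHom]
      rw [← h]; ring
    rw [this]; exact isIntegral_algebraMap
  obtain ⟨w, hw⟩ := IsIntegrallyClosed.isIntegral_iff.mp hint
  have hw' : (w : ℚ) = d * c := by simpa using hw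
  have h2 : w ^ 2 = d * z := by
    have : (w : ℚ) ^ 2 = d * z := by rw [hw', ← h]; ring
    exact_mod_cast this
  have hdvd : (d : ℤ) ∣ w :=
    ((Int.squarefree_natCast.mpr hd).dvd_pow_iff_dvd (by norm_num : (2 : ℕ) ≠ 0)).mp ⟨z, h2⟩
  obtain ⟨e, rfl⟩ := hdvd
  refine ⟨e, ?_⟩
  have d0 : (d : ℚ) ≠ 0 := by exact_mod_cast hd.ne_zero
  push_cast at hw'
  exact (mul_left_cancel₀ d0 hw').symm

/-- The integers of `ℚ(√d)` for `d ≡ 2, 3 (mod 4)` are `ℤ[√d]`. -/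
theorem quad_int {d : ℕ} (hd : Squarefree d) (h4 : d % 4 = 2 ∨ d % 4 = 3) {P Q : ℚ}
    {x y : ℝ} (h1 : IsIntegral ℤ x) (h2 : IsIntegral ℤ y) (hx : x = P + Q * √(d : ℝ))
    (hy : y = P - Q * √(d : ℝ)) :
    (∃ a : ℤ, P = a) ∧ ∃ b : ℤ, Q = b := by
  have hdd : √(d : ℝ) * √(d : ℝ) = d := Real.mul_self_sqrt (by positivity)
  obtain ⟨e, he⟩ := exists_int_of_isIntegral_rat (c := 2 * P) (h1.add h2)
    (by rw [hx, hy]; push_cast; ring)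
  obtain ⟨N, hN⟩ := exists_int_of_isIntegral_rat (c := P ^ 2 - d * Q ^ 2) (h1.mul h2)
    (by rw [hx, hy]; push_cast; linear_combination (-Q ^ 2 : ℝ) * hdd)
  obtain ⟨f, hf⟩ := exists_int_of_squarefree_mul_sq hd (c := 2 * Q) (z := e ^ 2 - 4 * N)
    (by push_cast; rw [← he, ← hN]; ring)
  have hef : e ^ 2 - d * f ^ 2 = 4 * N := by
    have : (e : ℚ) ^ 2 - d * f ^ 2 = 4 * N := by rw [← he, ← hf, ← hN]; ring
    exact_mod_cast this
  have hpar : e % 2 = 0 ∧ f % 2 = 0 := by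
    obtain ⟨D, hD⟩ : ∃ D : ℤ, (d : ℤ) = 4 * D + 2 ∨ (d : ℤ) = 4 * D + 3 :=
      ⟨(d / 4 : ℕ), by omega⟩
    rcases Int.even_or_odd' e with ⟨e', rfl | rfl⟩ <;>
    rcases Int.even_or_odd' f with ⟨f', rfl | rfl⟩ <;>
    rcases hD with hD | hD <;> rw [hD] at hef <;> ring_nf at hef ⊢ <;> omega
  obtain ⟨⟨e', rfl⟩, ⟨f', rfl⟩⟩ := (⟨Int.dvd_of_emod_eq_zero hpar.1,
    Int.dvd_of_emod_eq_zero hpar.2⟩ : (2 : ℤ) ∣ e ∧ (2 : ℤ) ∣ f)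
  push_cast at he hf
  exact ⟨⟨e', by linarith⟩, ⟨f', by linarith⟩⟩

/-- Elements of `𝒪_K` have the shape `(a + b√n + c√m + d√r)/2` with `a ≡ b` and `c ≡ d`
modulo 2. The half-integrality comes from the traces to the three quadratic subfields, the
congruences from the norm to `ℚ(√m)`. -/
theorem integer_coords {m n r g m' n' : ℕ} (H : BiquadData m n r g m' n') {x : ℝ}
    (hx : MemOK m n x) :
    ∃ a b c d : ℤ, 2 * x = a + b * √(n : ℝ) + c * √(m : ℝ) + d * √(r : ℝ) ∧
      (2 : ℤ) ∣ a - b ∧ (2 : ℤ) ∣ c - d := by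
  obtain ⟨hxK, hx⟩ := hx
  obtain ⟨p, q, u, v, e⟩ := exists_rat_coords H hxK
  obtain ⟨hmm, hnn, hrr, hmn, hmr, hnr⟩ := H.table
  have i1 := ConjPair.isIntegral H (ε := 1) (δ := -1) (by norm_num) (by norm_num)
    ⟨p, q, u, v, e, rfl⟩ hx
  have i2 := ConjPair.isIntegral H (ε := -1) (δ := 1) (by norm_num) (by norm_num)
    ⟨p, q, u, v, e, rfl⟩ hx
  have i3 := ConjPair.isIntegral H (ε := -1) (δ := -1) (by norm_num) (by norm_num)
    ⟨p, q, u, v, e, rfl⟩ hx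
  push_cast at i1 i2 i3
  have hr4 : r % 4 = 2 ∨ r % 4 = 3 := by have := H.r4; have := H.m4; omega
  obtain ⟨⟨a, ha⟩, ⟨c, hc⟩⟩ := quad_int H.sm H.m4 (P := 2 * p) (Q := 2 * q)
    (hx.add i1) (i2.add i3)
    (by rw [e]; push_cast; ring) (by push_cast; ring)
  obtain ⟨-, ⟨d, hd⟩⟩ := quad_int H.sr hr4 (P := 2 * p) (Q := 2 * v)
    (hx.add i3) (i1.add i2)
    (by rw [e]; push_cast; ring) (by push_cast; ring)
  obtain ⟨b, hb⟩ : ∃ b : ℤ, 2 * u = b := by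
    obtain ⟨N, hN⟩ := exists_int_of_isIntegral_rat (c := (2 * p) ^ 2 - n * (2 * u) ^ 2)
      ((hx.add i2).mul (i1.add i3))
      (by rw [e]; push_cast; linear_combination (-4 * u ^ 2 : ℝ) * hnn)
    exact exists_int_of_squarefree_mul_sq H.sn (z := a ^ 2 - N)
      (by push_cast; rw [← ha, ← hN]; ring)
  obtain ⟨⟨X, hX⟩, ⟨Y, hY⟩⟩ := quad_int H.sm H.m4
    (P := p ^ 2 + m * q ^ 2 - n * u ^ 2 - r * v ^ 2) (Q := 2 * p * q - 2 * n' * u * v)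
    (hx.mul i1) (i2.mul i3)
    (by
      rw [e]; push_cast
      linear_combination (q ^ 2 : ℝ) * hmm - (u ^ 2 : ℝ) * hnn - (v ^ 2 : ℝ) * hrr
        - (2 * u * v : ℝ) * hnr)
    (by
      push_cast
      linear_combination (q ^ 2 : ℝ) * hmm - (u ^ 2 : ℝ) * hnn - (v ^ 2 : ℝ) * hrr
        + (2 * u * v : ℝ) * hnr)
  have hX' : a ^ 2 + m * c ^ 2 - n * b ^ 2 - r * d ^ 2 = 4 * X := by
    have : (a : ℚ) ^ 2 + m * c ^ 2 - n * b ^ 2 - r * d ^ 2 = 4 * X := by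
      rw [← ha, ← hb, ← hc, ← hd, ← hX]; ring
    exact_mod_cast this
  have hY' : a * c - n' * (b * d) = 2 * Y := by
    have : (a : ℚ) * c - n' * (b * d) = 2 * Y := by
      rw [← ha, ← hb, ← hc, ← hd, ← hY]; ring
    exact_mod_cast this
  have haR : (2 : ℝ) * p = a := by exact_mod_cast ha
  have hbR : (2 : ℝ) * u = b := by exact_mod_cast hb
  have hcR : (2 : ℝ) * q = c := by exact_mod_cast hc
  have hdR : (2 : ℝ) * v = d := by exact_mod_cast hd
  refine ⟨a, b, c, d, by rw [e, ← haR, ← hbR, ← hcR, ← hdR]; ring, ?_⟩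
  have hn'o : n' % 2 = 1 := by
    by_contra h
    have : 2 ∣ n := by rw [H.hn]; exact Dvd.dvd.mul_left (by omega) _
    have := H.n4
    omega
  obtain ⟨E, hE⟩ : ∃ E : ℤ, (n' : ℤ) = 2 * E + 1 := ⟨(n' / 2 : ℕ), by omega⟩
  obtain ⟨Nn, hNn⟩ : ∃ D : ℤ, (n : ℤ) = 4 * D + 1 := ⟨(n / 4 : ℕ), by have := H.n4; omega⟩
  obtain ⟨M, R, hMR⟩ : ∃ M R : ℤ, ((m : ℤ) = 4 * M + 2 ∧ (r : ℤ) = 4 * R + 2) ∨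
      ((m : ℤ) = 4 * M + 3 ∧ (r : ℤ) = 4 * R + 3) :=
    ⟨(m / 4 : ℕ), (r / 4 : ℕ), by have := H.m4; have := H.r4; omega⟩
  rw [hE] at hY'
  rw [hNn] at hX'
  clear hX hY ha hb hc hd haR hbR hcR hdR i1 i2 i3 hx e hxK
  rcases Int.even_or_odd' a with ⟨a', rfl | rfl⟩ <;>
  rcases Int.even_or_odd' b with ⟨b', rfl | rfl⟩ <;>
  rcases Int.even_or_odd' c with ⟨c', rfl | rfl⟩ <;>
  rcases Int.even_or_odd' d with ⟨d', rfl | rfl⟩ <;>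
  rcases hMR with ⟨hM, hR⟩ | ⟨hM, hR⟩ <;> rw [hM, hR] at hX' <;> ring_nf at hX' hY' ⊢ <;> omega

/-! ### The coefficient equations and their insolubility -/

/-- Comparison of coefficients in `P + Q√m + R√r = ∑ xᵢ²`. -/
theorem sum_sq_coords {m n r g m' n' : ℕ} (H : BiquadData m n r g m' n') {γ : ℝ} (P Q R : ℤ)
    (hγ : γ = P + Q * √(m : ℝ) + R * √(r : ℝ)) (hs : IsSumSqOK m n γ) :
    ∃ (t : ℕ) (a b c d : Fin t → ℤ), (∀ i, (2 : ℤ) ∣ a i - b i) ∧ (∀ i, (2 : ℤ) ∣ c i - d i) ∧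
      ∑ i, (a i ^ 2 + n * b i ^ 2 + m * c i ^ 2 + r * d i ^ 2) = 4 * P ∧
      ∑ i, (a i * c i + n' * (b i * d i)) = 2 * Q ∧
      ∑ i, (a i * d i + g * (b i * c i)) = 2 * R := by
  obtain ⟨t, x, hx, hsum⟩ := hs
  choose a b c d hx2 hab hcd using fun i => integer_coords H (hx i)
  obtain ⟨hmm, hnn, hrr, hmn, hmr, hnr⟩ := H.table
  have key : (4 : ℝ) * γ = (∑ i, (a i ^ 2 + n * b i ^ 2 + m * c i ^ 2 + r * d i ^ 2) : ℤ)
      + 2 * (∑ i, (a i * c i + n' * (b i * d i)) : ℤ) * √(m : ℝ)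
      + 2 * (∑ i, (a i * b i + m' * (c i * d i)) : ℤ) * √(n : ℝ)
      + 2 * (∑ i, (a i * d i + g * (b i * c i)) : ℤ) * √(r : ℝ) := by
    rw [hsum]
    push_cast
    simp only [Finset.mul_sum, Finset.sum_mul, ← Finset.sum_add_distrib]
    refine Finset.sum_congr rfl fun i _ => ?_
    linear_combination (2 * x i + (a i + b i * √(n : ℝ) + c i * √(m : ℝ) + d i * √(r : ℝ)))
      * hx2 i + (c i ^ 2 : ℝ) * hmm + (b i ^ 2 : ℝ) * hnn + (d i ^ 2 : ℝ) * hrr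
      + (2 * b i * c i : ℝ) * hmn + (2 * c i * d i : ℝ) * hmr + (2 * b i * d i : ℝ) * hnr
  generalize hA : ∑ i, (a i ^ 2 + n * b i ^ 2 + m * c i ^ 2 + r * d i ^ 2) = SA at key
  generalize hB : ∑ i, (a i * c i + n' * (b i * d i)) = SB at key
  generalize ∑ i, (a i * b i + m' * (c i * d i)) = SC at key
  generalize hD : ∑ i, (a i * d i + g * (b i * c i)) = SD at key
  obtain ⟨e1, e2, -, e4⟩ := H.lin4 (SA - 4 * P) (2 * SB - 4 * Q) (2 * SC) (2 * SD - 4 * R)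
    (by push_cast; rw [hγ] at key; linear_combination -key)
  refine ⟨t, a, b, c, d, hab, hcd, ?_, ?_, ?_⟩
  · rw [hA]; have : (SA : ℚ) = 4 * P := by linarith
    exact_mod_cast this
  · rw [hB]; have : (SB : ℚ) = 2 * Q := by linarith
    exact_mod_cast this
  · rw [hD]; have : (SD : ℚ) = 2 * R := by linarith
    exact_mod_cast this

/-- With `V` at least `l M²`, the weight `λ = q / (l M) ≤ 1` gives `V + W ≥ q² / l + l M²`, and
the lower endpoint of `I₁` makes this at least `2 q M + 4 S²`. -/
theorem add_ge_of_le {q M S L V W l : ℝ} (hqpos : 0 < q) (hMpos : 0 < M) (hSpos : 0 < S)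
    (hLpos : 0 < L) (hlpos : 0 < l) (hLL : L ^ 2 = l) (hlow : q + 2 * S * L ≤ l * M)
    (hlam : ∀ x : ℝ, 2 * x * (q * M) ≤ W + x ^ 2 * V) (hV0 : M ^ 2 * l ≤ V) :
    2 * q * M + 4 * S ^ 2 ≤ V + W := by
  have hx1 : q / (l * M) ≤ 1 := by
    rw [div_le_one (by positivity)]
    nlinarith [mul_pos hSpos hLpos]
  have hx0 : 0 ≤ q / (l * M) := by positivity
  have := hlam (q / (l * M))
  have h3 : (1 - (q / (l * M)) ^ 2) * (M ^ 2 * l) ≤ (1 - (q / (l * M)) ^ 2) * V :=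
    mul_le_mul_of_nonneg_left hV0 (by nlinarith)
  have h4 : 2 * (q / (l * M)) * (q * M) = 2 * (q ^ 2 / l) := by field_simp
  have h5 : (1 - (q / (l * M)) ^ 2) * (M ^ 2 * l) = M ^ 2 * l - q ^ 2 / l := by field_simp
  have h6 : 2 * q * M + 4 * S ^ 2 ≤ q ^ 2 / l + M ^ 2 * l := by
    have : (2 * S * L) ^ 2 ≤ (l * M - q) ^ 2 := by
      have : 0 < 2 * S * L := by positivity
      exact pow_le_pow_left₀ this.le (by linarith) 2
    have h7 : q ^ 2 / l + M ^ 2 * l - 2 * q * M - 4 * S ^ 2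
        = ((l * M - q) ^ 2 - (2 * S * L) ^ 2) / l := by
      rw [← hLL]; field_simp; ring
    have : 0 ≤ ((l * M - q) ^ 2 - (2 * S * L) ^ 2) / (l : ℝ) :=
      div_nonneg (by linarith) (by linarith)
    linarith
  linarith

/-- With `V` at most `h²`, where `h = R (l - 1) / L`, the weight `λ = q M / h² ≥ 1` gives
`V + W ≥ (q M)² / h² + h²`, and the endpoints of `I₁` make this at least `2 q M + 4 S²`. -/
theorem add_ge_of_ge {q M R S L V W l h : ℝ} (hqpos : 0 < q) (hMpos : 0 < M) (hSpos : 0 < S)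
    (hLpos : 0 < L) (hlpos : 0 < l) (hLL : L ^ 2 = l) (hlow : q + 2 * S * L ≤ l * M)
    (hup : (l - 1) * R ≤ q) (hh : h = R * (l - 1) / L) (hhpos : 0 < h)
    (hlam : ∀ x : ℝ, 2 * x * (q * M) ≤ W + x ^ 2 * V) (hV0 : V ≤ h ^ 2) :
    2 * q * M + 4 * S ^ 2 ≤ V + W := by
  have hhq : h ≤ q / L := by
    rw [hh, div_le_div_iff_of_pos_right hLpos]; linarith
  have hqM : h ^ 2 + 2 * S * h ≤ q * M := by
    have h9 : (q / L) ^ 2 + 2 * S * (q / L) = q * ((q + 2 * S * L) / l) := by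
      rw [← hLL]; field_simp
    have h10 : (q + 2 * S * L) / l ≤ M := by
      rw [div_le_iff₀ (by linarith)]; linarith
    calc h ^ 2 + 2 * S * h ≤ (q / L) ^ 2 + 2 * S * (q / L) := by gcongr
      _ ≤ q * M := by rw [h9]; gcongr
  have hx1 : 1 ≤ q * M / h ^ 2 := by
    rw [one_le_div (by positivity)]
    nlinarith [mul_pos hSpos hhpos]
  have := hlam (q * M / h ^ 2)
  have h3 : ((q * M / h ^ 2) ^ 2 - 1) * V ≤ ((q * M / h ^ 2) ^ 2 - 1) * h ^ 2 :=
    mul_le_mul_of_nonneg_left hV0 (by nlinarith)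
  have h4 : 2 * (q * M / h ^ 2) * (q * M) = 2 * ((q * M) ^ 2 / h ^ 2) := by field_simp
  have h5 : ((q * M / h ^ 2) ^ 2 - 1) * h ^ 2 = (q * M) ^ 2 / h ^ 2 - h ^ 2 := by field_simp
  have h6 : 2 * q * M + 4 * S ^ 2 ≤ (q * M) ^ 2 / h ^ 2 + h ^ 2 := by
    have : (2 * S * h) ^ 2 ≤ (q * M - h ^ 2) ^ 2 := by
      have : 0 < 2 * S * h := by positivity
      exact pow_le_pow_left₀ this.le (by linarith) 2
    have h7 : (q * M) ^ 2 / h ^ 2 + h ^ 2 - 2 * q * M - 4 * S ^ 2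
        = ((q * M - h ^ 2) ^ 2 - (2 * S * h) ^ 2) / h ^ 2 := by
      field_simp; ring
    have : 0 ≤ ((q * M - h ^ 2) ^ 2 - (2 * S * h) ^ 2) / h ^ 2 :=
      div_nonneg (by linarith) (by positivity)
    linarith
  linarith

/-- The heart of the argument: if `m ≤ r`, the system of coefficient equations for
`s (A + k√m) = ∑ xᵢ²` with `A < k√m + 1` has no solution. Parity forces `l` even, so that
`∑ (cᵢ² + dᵢ²)`, an even number, is either at least `l` or at most `l - 2`; the weighted
inequality `W + λ² V ≥ 2 λ q √m` excludes both. The hypotheses are symmetric under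
`(m, g, c) ↔ (r, n', d)`, apart from `m ≤ r`. -/
theorem core {t : ℕ} (a b c d : Fin t → ℤ) {m n r g m' n' s k l A : ℕ}
    (hm : m = g * m') (hn : n = g * n') (hr : r = n' * m') (hn4 : n % 4 = 1)
    (hmpos : 0 < m) (hs : 0 < s) (hk : 0 < k) (hl : 0 < l)
    (hpar : l % 2 = (s * k) % 2) (hmr : m ≤ r)
    (h₁ : √(m : ℝ) ∈ I1 s k l) (h₂ : √(r : ℝ) ∈ I1 s k l)
    (hA : (A : ℝ) < k * √(m : ℝ) + 1)
    (hab : ∀ i, (2 : ℤ) ∣ a i - b i) (hcd : ∀ i, (2 : ℤ) ∣ c i - d i)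
    (e1 : ∑ i, (a i ^ 2 + n * b i ^ 2 + m * c i ^ 2 + r * d i ^ 2) = 4 * (s * A))
    (e2 : ∑ i, (a i * c i + n' * (b i * d i)) = 2 * (s * k))
    (e3 : ∑ i, (a i * d i + g * (b i * c i)) = 0) : False := by
  have hgn : (4 : ℤ) ∣ g - n' ∧ (2 : ℤ) ∣ g - 1 := by
    have hp : (g % 4) * (n' % 4) % 4 = 1 := by rw [← Nat.mul_mod, ← hn, hn4]
    have : g % 4 < 4 := Nat.mod_lt _ (by norm_num)
    have : n' % 4 < 4 := Nat.mod_lt _ (by norm_num)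
    generalize hx : g % 4 = x at *
    generalize hy : n' % 4 = y at *
    interval_cases x <;> interval_cases y <;> omega
  -- The coefficients of `√m` and `√r` differ by `(a - g b)(c - d)` modulo 4.
  have hsk : (4 : ℤ) ∣ 2 * (s * k) := by
    rw [← sub_zero (2 * ((s : ℤ) * k)), ← e2, ← e3, ← Finset.sum_sub_distrib]
    refine Finset.dvd_sum fun i _ => ?_
    obtain ⟨⟨u, hu⟩, ⟨v, hv⟩⟩ := hgn
    obtain ⟨j, hj⟩ := hab i
    obtain ⟨f, hf⟩ := hcd i
    refine ⟨(j - v * b i) * f - u * (b i * d i), ?_⟩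
    have ha' : a i = b i + 2 * j := by linarith
    have hc' : c i = d i + 2 * f := by linarith
    rw [ha', hc']
    have hgg : (g : ℤ) = 1 + 2 * v := by linarith
    have hnn : (n' : ℤ) = 1 + 2 * v - 4 * u := by linarith
    rw [hgg, hnn]
    ring
  have hleven : l % 2 = 0 := by
    have : (2 : ℤ) ∣ ((s * k : ℕ) : ℤ) := by push_cast; omega
    have : 2 ∣ s * k := by exact_mod_cast this
    omega
  have hCDeven : (2 : ℤ) ∣ ∑ i, (c i ^ 2 + d i ^ 2) := by
    refine Finset.dvd_sum fun i _ => ?_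
    obtain ⟨f, hf⟩ := hcd i
    exact ⟨d i ^ 2 + 2 * f * d i + 2 * f ^ 2, by
      rw [show c i = d i + 2 * f by linarith]; ring⟩
  rw [I1, if_neg (by omega)] at h₁ h₂
  have h1 := h₁.1
  have h2 := h₂.2
  set M : ℝ := √(m : ℝ) with hMdef
  set R : ℝ := √(r : ℝ) with hRdef
  set N : ℝ := √(n : ℝ)
  have hMM : M ^ 2 = m := Real.sq_sqrt (by positivity)
  have hRR : R ^ 2 = r := Real.sq_sqrt (by positivity)
  have hNN : N ^ 2 = n := Real.sq_sqrt (by positivity)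
  have hMpos : 0 < M := Real.sqrt_pos.mpr (by exact_mod_cast hmpos)
  have hRpos : 0 < R := Real.sqrt_pos.mpr (by exact_mod_cast lt_of_lt_of_le hmpos hmr)
  have hNR : N * R = n' * M := by
    rw [← Real.sqrt_mul (by positivity), hMdef]
    have : (n : ℝ) * r = n' ^ 2 * m := by
      rw [hn, hr, hm]; push_cast; ring
    rw [this, Real.sqrt_mul (by positivity), Real.sqrt_sq (by positivity)]
  have hl2 : (2 : ℝ) ≤ l := by exact_mod_cast (by omega : 2 ≤ l)
  set L : ℝ := √(l : ℝ)
  have hLL : L ^ 2 = l := Real.sq_sqrt (by positivity)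
  have hLpos : 0 < L := Real.sqrt_pos.mpr (by linarith)
  set S : ℝ := √(s : ℝ)
  have hSS : S ^ 2 = s := Real.sq_sqrt (by positivity)
  have hSpos : 0 < S := Real.sqrt_pos.mpr (by exact_mod_cast hs)
  set q : ℝ := 2 * s * k with hq
  have hqpos : 0 < q := by positivity
  -- The two consequences of the interval hypotheses that matter.
  have hlow : q + 2 * S * L ≤ l * M := by
    have : q / l + 2 * S / L = (q + 2 * S * L) / l := by
      rw [← hLL]; field_simp
    rw [this, div_le_iff₀ (by linarith)] at h1
    linarith
  have hup : (l - 1) * R ≤ q := by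
    have h0 : 0 ≤ 2 * S / √((l : ℝ) - 1) := by positivity
    have : R ≤ q / (l - 1) := by linarith
    rw [le_div_iff₀ (by linarith)] at this
    linarith
  -- `V` and `W` collect the `√m, √r` and the `1, √n` coordinates.
  obtain ⟨V, hV⟩ : ∃ V : ℝ, V = ∑ i, ((m : ℝ) * c i ^ 2 + r * d i ^ 2) := ⟨_, rfl⟩
  obtain ⟨W, hW⟩ : ∃ W : ℝ, W = ∑ i, ((a i : ℝ) ^ 2 + n * b i ^ 2) := ⟨_, rfl⟩
  have hVW : V + W = 4 * (s * A) := by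
    have : ((∑ i, (a i ^ 2 + n * b i ^ 2 + m * c i ^ 2 + r * d i ^ 2) : ℤ) : ℝ)
      = 4 * (s * A) := by rw [e1]; push_cast; ring
    rw [← this, hV, hW, ← Finset.sum_add_distrib]
    push_cast
    exact Finset.sum_congr rfl fun i _ => by ring
  have hVWlt : V + W < 2 * q * M + 4 * s := by
    rw [hVW, hq]
    have hs' : (0 : ℝ) < s := by exact_mod_cast hs
    linarith only [mul_lt_mul_of_pos_left hA hs']
  have hlam : ∀ x : ℝ, 2 * x * (q * M) ≤ W + x ^ 2 * V := by
    intro x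
    have h0 : 0 ≤ ∑ i, (((a i : ℝ) - x * M * c i) ^ 2 + (N * b i - x * R * d i) ^ 2) :=
      Finset.sum_nonneg fun i _ => by positivity
    have e2' : ∑ i, ((a i : ℝ) * c i + n' * (b i * d i)) = q := by
      have := congrArg (Int.cast : ℤ → ℝ) e2
      push_cast at this
      rw [this, hq]; ring
    have : ∑ i, (((a i : ℝ) - x * M * c i) ^ 2 + (N * b i - x * R * d i) ^ 2)
        = W + x ^ 2 * V - 2 * x * M * q := by
      rw [← e2', hV, hW, Finset.mul_sum, Finset.mul_sum, ← Finset.sum_add_distrib,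
        ← Finset.sum_sub_distrib]
      refine Finset.sum_congr rfl fun i _ => ?_
      rw [← hMM, ← hRR, ← hNN]
      linear_combination (-2 * x * b i * d i) * hNR
    linarith
  have hCD : ((∑ i, (c i ^ 2 + d i ^ 2) : ℤ) : ℝ) = ∑ i, ((c i : ℝ) ^ 2 + d i ^ 2) := by
    push_cast; rfl
  have hmr' : (m : ℝ) ≤ r := by exact_mod_cast hmr
  have hVm : m * ((∑ i, (c i ^ 2 + d i ^ 2) : ℤ) : ℝ) ≤ V := by
    rw [hCD, hV, Finset.mul_sum]
    exact Finset.sum_le_sum fun i _ => by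
      linarith only [mul_le_mul_of_nonneg_right hmr' (sq_nonneg (d i : ℝ))]
  have hVr : V ≤ r * ((∑ i, (c i ^ 2 + d i ^ 2) : ℤ) : ℝ) := by
    rw [hCD, hV, Finset.mul_sum]
    exact Finset.sum_le_sum fun i _ => by
      linarith only [mul_le_mul_of_nonneg_right hmr' (sq_nonneg (c i : ℝ))]
  rw [← hSS] at hVWlt
  refine absurd hVWlt (not_lt.mpr ?_)
  rcases le_or_gt (l : ℤ) (∑ i, (c i ^ 2 + d i ^ 2)) with hT | hT
  · refine add_ge_of_le hqpos hMpos hSpos hLpos (by linarith) hLL hlow hlam ?_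
    rw [hMM]
    refine le_trans (mul_le_mul_of_nonneg_left ?_ (Nat.cast_nonneg m)) hVm
    exact_mod_cast hT
  · have hT2 : ((∑ i, (c i ^ 2 + d i ^ 2) : ℤ) : ℝ) ≤ l - 2 := by
      have : ∑ i, (c i ^ 2 + d i ^ 2) ≤ (l : ℤ) - 2 := by omega
      exact_mod_cast this
    refine add_ge_of_ge hqpos hMpos hSpos hLpos (by linarith) hLL hlow hup rfl
      (div_pos (mul_pos hRpos (by linarith)) hLpos) hlam ?_
    have h8 : (R * (l - 1) / L) ^ 2 = r * ((l - 1) ^ 2 / l) := by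
      rw [← hRR, ← hLL]; field_simp
    rw [h8]
    refine hVr.trans (mul_le_mul_of_nonneg_left (hT2.trans ?_) (Nat.cast_nonneg r))
    rw [le_div_iff₀ (by linarith)]
    nlinarith

/-! ### The totally positive element -/

theorem isIntegral_sqrt_natCast (d : ℕ) : IsIntegral ℤ √(d : ℝ) :=
  IsIntegral.of_pow (n := 2) (by norm_num)
    (by rw [Real.sq_sqrt (by positivity)]; exact isIntegral_algebraMap (x := (d : ℤ)))

/-- The element `⌈k√e⌉ + k√e` is integral and totally positive, for `√e ∈ K` with
`e ≠ 1` squarefree; irrationality of `√e` makes the inequality `k√e < ⌈k√e⌉` strict. -/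
theorem ceil_add_memOK_isTotPos {m n e : ℕ} (k : ℕ) (hk : 0 < k) (he : Squarefree e)
    (he1 : e ≠ 1) (hK : √(e : ℝ) ∈ Kbq m n) :
    MemOK m n ((⌈k * √(e : ℝ)⌉₊ : ℝ) + k * √(e : ℝ)) ∧
      IsTotPos m n ((⌈k * √(e : ℝ)⌉₊ : ℝ) + k * √(e : ℝ)) := by
  have hmem : (⌈k * √(e : ℝ)⌉₊ : ℝ) + k * √(e : ℝ) ∈ Kbq m n :=
    add_mem (natCast_mem _ _) (mul_mem (natCast_mem _ _) hK)
  have hint : ∀ j : ℕ, IsIntegral ℤ (j : ℝ) := fun j => isIntegral_algebraMap (x := (j : ℤ))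
  refine ⟨⟨hmem, (hint _).add ((hint _).mul (isIntegral_sqrt_natCast e))⟩, hmem, fun σ => ?_⟩
  have hlt : k * √(e : ℝ) < ⌈k * √(e : ℝ)⌉₊ := by
    refine lt_of_le_of_ne (Nat.le_ceil _) fun h => ?_
    have := (rat_lin2 he he1 (-(⌈k * √(e : ℝ)⌉₊ : ℚ)) k (by push_cast; linarith)).2
    have : k = 0 := by exact_mod_cast this
    omega
  generalize ⌈k * √(e : ℝ)⌉₊ = A at *
  have h1 : (⟨(A : ℝ) + k * √(e : ℝ), hmem⟩ : Kbq m n) = A + k * ⟨√(e : ℝ), hK⟩ := by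
    ext; simp
  rw [h1, map_add, map_mul, map_natCast, map_natCast]
  have h2 : σ ⟨√(e : ℝ), hK⟩ ^ 2 = e := by
    rw [← map_pow]
    have : (⟨√(e : ℝ), hK⟩ : Kbq m n) ^ 2 = e := by
      ext; simp
    rw [this, map_natCast]
  have h3 := neg_le_of_abs_le (Real.abs_le_sqrt h2.le)
  have hk' : (0 : ℝ) < k := by exact_mod_cast hk
  nlinarith

/-- **Proposition 1(2).** If `l ≡ s₀k (mod 2)`, `m ≡ 2 or 3 (mod 4)`, `n ≡ 1 (mod 4)`,
`m ≥ s₀`, `n ≥ 4s₀`, `√m, √r ∈ I₁` and `√n ∈ J`, then not all elements of `s₀𝒪_K⁺`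
are sums of squares. -/
theorem not_all_sums_of_squares_of_mem_I1_J
    (m n r : ℕ) (hm : 1 < m) (hn : 1 < n) (hmn : m ≠ n)
    (hsm : Squarefree m) (hsn : Squarefree n)
    (hr : r = m * n / Nat.gcd m n ^ 2)
    (s₀ l k : ℕ) (hs₀ : 0 < s₀) (hl : 0 < l) (hk : 0 < k)
    (hpar : l % 2 = (s₀ * k) % 2)
    (hm4 : m % 4 = 2 ∨ m % 4 = 3) (hn4 : n % 4 = 1)
    (hms : s₀ ≤ m) (hns : 4 * s₀ ≤ n)
    (h₁ : Real.sqrt (m : ℝ) ∈ I1 s₀ k l) (h₂ : Real.sqrt (r : ℝ) ∈ I1 s₀ k l)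
    (h₃ : Real.sqrt (n : ℝ) ∈ Jset s₀ k l) :
    ∃ α : ℝ, MemOK m n α ∧ IsTotPos m n α ∧ ¬ IsSumSqOK m n ((s₀ : ℝ) * α) := by
  obtain ⟨g, m', n', H⟩ := biquadData_gcd hm hn hsm hsn hr hm4 hn4
  have hM : √(m : ℝ) ∈ Kbq m n := IntermediateField.subset_adjoin _ _ (by simp)
  have hN : √(n : ℝ) ∈ Kbq m n := IntermediateField.subset_adjoin _ _ (by simp)
  have hR : √(r : ℝ) ∈ Kbq m n := by
    have hg : (g : ℝ) ≠ 0 := by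
      have := H.sm.ne_zero
      rw [H.hm] at this
      exact_mod_cast left_ne_zero_of_mul this
    have : √(r : ℝ) = √(m : ℝ) * √(n : ℝ) / g := by
      rw [H.table.2.2.2.1]; field_simp
    rw [this]
    exact div_mem (mul_mem hM hN) (natCast_mem _ _)
  rcases le_total m r with hmr | hmr
  · obtain ⟨hOK, hpos⟩ := ceil_add_memOK_isTotPos k hk hsm H.m1 hM
    refine ⟨_, hOK, hpos, fun hs => ?_⟩
    obtain ⟨t, a, b, c, d, hab, hcd, e1, e2, e3⟩ :=
      sum_sq_coords H (s₀ * ⌈k * √(m : ℝ)⌉₊) (s₀ * k) 0 (by push_cast; ring) hs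
    exact core a b c d H.hm H.hn (H.hr.trans (mul_comm _ _)) hn4 (by omega) hs₀ hk hl hpar hmr
      h₁ h₂ (Nat.ceil_lt_add_one (by positivity)) hab hcd e1 e2 (by simpa using e3)
  · obtain ⟨hOK, hpos⟩ := ceil_add_memOK_isTotPos k hk H.sr H.r1 hR
    refine ⟨_, hOK, hpos, fun hs => ?_⟩
    obtain ⟨t, a, b, c, d, hab, hcd, e1, e2, e3⟩ :=
      sum_sq_coords H (s₀ * ⌈k * √(r : ℝ)⌉₊) 0 (s₀ * k) (by push_cast; ring) hs
    refine core a b d c (H.hr.trans (mul_comm _ _)) (H.hn.trans (mul_comm _ _)) H.hm hn4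
      (Nat.pos_of_ne_zero H.sr.ne_zero) hs₀ hk hl hpar hmr
      h₂ h₁ (Nat.ceil_lt_add_one (by positivity)) hab
      (fun i => by rw [← neg_sub, dvd_neg]; exact hcd i) ?_ e3 (by simpa using e2)
    rw [← e1]
    exact Finset.sum_congr rfl fun i _ => by ring
end
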